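/- For every T ∈ (0,1), if the free energy F(T) = −T log₂ Z(T) is computable, then T is weakly Chaitin T-random and T-compressible. -/

import Mathlib

open Filter

/-- A real number `α` is computable if some total recursive `f : ℕ+ → ℚ`
satisfies `|α - f n| < 1/n` for all `n`. -/
def ComputableReal (α : ℝ) : Prop :=
  ∃ f : ℕ+ → ℚ, Computable f ∧ ∀ n : ℕ+, |α - (f n : ℝ)| < 1 / (n : ℝ)

/-- A partial function on binary strings has prefix-free domain. -/
def PrefixFree (C : List Bool →. List Bool) : Prop :=
  ∀ p q : List Bool, (C p).Dom → (C q).Dom → p <+: q → p = q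

/-- `U` is an optimal prefix-free machine (universal self-delimiting Turing machine). -/
def OptimalMachine (U : List Bool →. List Bool) : Prop :=
  Partrec U ∧ PrefixFree U ∧
    ∀ C : List Bool →. List Bool, Partrec C → PrefixFree C →
      ∃ d : ℕ, ∀ p s, s ∈ C p → ∃ p', s ∈ U p' ∧ p'.length ≤ p.length + d

/-- Program-size (prefix-free Kolmogorov) complexity of `s` with respect to `U`. -/
noncomputable def complexity (U : List Bool →. List Bool) (s : List Bool) : ℕ :=
  sInf {n | ∃ p : List Bool, p.length = n ∧ s ∈ U p}

/-- The `i`-th bit (0-indexed) of the base-two expansion of the fractional part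
of `α`, in the expansion with infinitely many zeros. -/
noncomputable def bitOf (α : ℝ) (i : ℕ) : Bool := decide (⌊Int.fract α * 2 ^ (i + 1)⌋ % 2 = 1)

/-- The first `n` bits of the base-two expansion of `α - ⌊α⌋`
(with infinitely many zeros). -/
noncomputable def firstBits (α : ℝ) (n : ℕ) : List Bool := (List.range n).map (bitOf α)

/-- `α` is weakly Chaitin `T`-random: `∃ c, ∀ n, T·n − c ≤ H(α_n)`. -/
def WeaklyChaitinTRandom (U : List Bool →. List Bool) (T α : ℝ) : Prop :=
  ∃ c : ℕ, ∀ n : ℕ+, T * (n : ℝ) - (c : ℝ) ≤ (complexity U (firstBits α n) : ℝ)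

/-- `α` is `T`-compressible: `limsup H(α_n)/n ≤ T`. -/
def TCompressible (U : List Bool →. List Bool) (T α : ℝ) : Prop :=
  Filter.limsup (fun n : ℕ => (complexity U (firstBits α n) : ℝ) / (n : ℝ)) atTop ≤ T

/-- The partition function `Z(T) = ∑_{p ∈ dom U} 2^{-|p|/T}`. -/
noncomputable def Zfun (U : List Bool →. List Bool) (T : ℝ) : ℝ :=
  ∑' p : {p : List Bool // (U p).Dom}, (2 : ℝ) ^ (-((p : List Bool).length : ℝ) / T)

/-- The free energy `F(T) = -T log₂ Z(T)`. -/
noncomputable def Ffun (U : List Bool →. List Bool) (T : ℝ) : ℝ :=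
  -T * Real.logb 2 (Zfun U T)



/-- The raw code of a rational number, through numerator and denominator. -/
def ratRaw (q : ℚ) : ℕ := Nat.pair (Encodable.encode q.num) q.den

def rawOk (k : ℕ) : Prop :=
  0 < k.unpair.2 ∧ ∀ g < k.unpair.2 + 1, ((k.unpair.1 + 1) / 2 % g = 0 ∧ k.unpair.2 % g = 0) → g = 1

instance : DecidablePred rawOk := fun k => by unfold rawOk; infer_instance

theorem encode_int_natAbs (z : ℤ) : (Encodable.encode z + 1) / 2 = z.natAbs := by
  rcases z with n | n
  · show (2 * n + 1) / 2 = n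
    omega
  · show (2 * n + 1 + 1) / 2 = n + 1
    omega

theorem encode_int_toNat (z : ℤ) :
    z.toNat = if Encodable.encode z % 2 = 0 then Encodable.encode z / 2 else 0 := by
  rcases z with n | n
  · show n = if (2 * n) % 2 = 0 then (2*n) / 2 else 0
    simp
  · show 0 = if (2 * n+1) % 2 = 0 then (2*n+1) / 2 else 0
    simp

theorem rawOk_iff (k : ℕ) : rawOk k ↔ ∃ q : ℚ, ratRaw q = k := by
  constructor
  · rintro ⟨h1, h2⟩
    set z : ℤ := Denumerable.ofNat ℤ k.unpair.1 with hz
    have hze : Encodable.encode z = k.unpair.1 := Denumerable.encode_ofNat _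
    have hcop : z.natAbs.Coprime k.unpair.2 := by
      rw [← encode_int_natAbs, hze]
      apply h2 (Nat.gcd _ _)
      · exact Nat.lt_succ_of_le (Nat.gcd_le_right _ h1)
      · exact ⟨Nat.mod_eq_zero_of_dvd (Nat.gcd_dvd_left _ _), Nat.mod_eq_zero_of_dvd (Nat.gcd_dvd_right _ _)⟩
    refine ⟨⟨z, k.unpair.2, h1.ne', hcop⟩, ?_⟩
    simp [ratRaw, hze]
  · rintro ⟨q, rfl⟩
    refine ⟨by simp [ratRaw, q.den_pos], ?_⟩
    intro g _ ⟨h1, h2⟩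
    simp only [ratRaw, Nat.unpair_pair, encode_int_natAbs] at h1 h2
    have := Nat.dvd_gcd (Nat.dvd_of_mod_eq_zero h1) (Nat.dvd_of_mod_eq_zero h2)
    rw [q.reduced.gcd_eq_one] at this
    exact Nat.dvd_one.mp this

theorem rat_encode_eq (q : ℚ) :
    @Encodable.encode ℚ (Primcodable.toEncodable) q = (List.range (ratRaw q)).countP (fun k => decide (rawOk k)) := by
  have h : @Encodable.encode ℚ (Primcodable.toEncodable) q = 
     @List.countP ℕ (fun k => @decide (k ∈ Set.range (@Encodable.encode ℚ Rat.instEncodable)) (Encodable.decidableRangeEncode ℚ k)) (List.range (ratRaw q)) := by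
    rfl
  rw [h]
  congr 1
  ext k
  simp only [Set.mem_range, decide_eq_decide]
  rw [rawOk_iff]
  rfl

theorem rawOk_primrec : PrimrecPred rawOk := by
  have h1 : Primrec (fun k : ℕ => k.unpair.1) := Primrec.fst.comp Primrec.unpair
  have h2 : Primrec (fun k : ℕ => k.unpair.2) := Primrec.snd.comp Primrec.unpair
  have hmod := Primrec.nat_mod
  have hR : PrimrecRel (fun (g : ℕ) (k : ℕ) =>
      (((k.unpair.1 + 1) / 2 % g = 0 ∧ k.unpair.2 % g = 0) → g = 1)) := by
    have e0 : PrimrecRel (fun a b : ℕ => a = b) := Primrec.eq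
    have a1 : PrimrecPred (fun x : ℕ × ℕ => (x.2.unpair.1 + 1) / 2 % x.1 = 0) :=
      e0.comp (Primrec.nat_mod.comp (Primrec.nat_div.comp (Primrec.succ.comp (h1.comp Primrec.snd)) (Primrec.const 2)) Primrec.fst) (Primrec.const 0)
    have a2 : PrimrecPred (fun x : ℕ × ℕ => x.2.unpair.2 % x.1 = 0) :=
      e0.comp (Primrec.nat_mod.comp (h2.comp Primrec.snd) Primrec.fst) (Primrec.const 0)
    have a3 : PrimrecPred (fun x : ℕ × ℕ => x.1 = 1) := e0.comp Primrec.fst (Primrec.const 1)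
    refine (((a1.and a2).not).or a3).of_eq ?_
    intro x
    tauto
  have hall := hR.forall_lt
  have a4 : PrimrecPred (fun k : ℕ => 0 < k.unpair.2) := Primrec.nat_lt.comp (Primrec.const 0) h2
  exact a4.and (hall.comp (Primrec.succ.comp h2) Primrec.id)

theorem rawCount_primrec : Primrec (fun n : ℕ => (List.range n).countP (fun k => decide (rawOk k))) := by
  have : Primrec (fun n : ℕ => ((List.range n).filter (fun k => decide (rawOk k))).length) :=
    Primrec.list_length.comp ((Primrec.listFilter rawOk_primrec).comp Primrec.list_range)
  exact this.of_eq fun n => by rw [List.countP_eq_length_filter]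

theorem rat_raw_computable : Computable ratRaw := by
  have hp : Computable₂ (fun (q : ℚ) (k : ℕ) =>
      decide (rawOk k ∧ @Encodable.encode ℚ (Primcodable.toEncodable) q = (List.range k).countP (fun k => decide (rawOk k)))) := by
    have e0 : PrimrecRel (fun a b : ℕ => a = b) := Primrec.eq
    have a1 : PrimrecPred (fun x : ℚ × ℕ => rawOk x.2) := rawOk_primrec.comp Primrec.snd
    have a2 : PrimrecPred (fun x : ℚ × ℕ => @Encodable.encode ℚ (Primcodable.toEncodable) x.1 = (List.range x.2).countP (fun k => decide (rawOk k))) :=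
      e0.comp (Primrec.encode.comp Primrec.fst) (rawCount_primrec.comp Primrec.snd)
    exact (a1.and a2).decide.to_comp
  refine (Partrec.rfind hp.partrec₂).of_eq_tot ?_
  intro q
  rw [Nat.mem_rfind]
  constructor
  · simp only [PFun.coe_val, Part.mem_some_iff]
    symm
    rw [decide_eq_true_eq]
    exact ⟨(rawOk_iff _).2 ⟨q, rfl⟩, rat_encode_eq q⟩
  · intro m hm
    simp only [PFun.coe_val, Part.mem_some_iff]
    symm
    rw [decide_eq_false_iff_not]
    rintro ⟨h1, h2⟩
    obtain ⟨q', rfl⟩ := (rawOk_iff _).1 h1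
    rw [← rat_encode_eq q'] at h2
    have := @Encodable.encode_injective ℚ (Primcodable.toEncodable) _ _ h2
    subst this
    exact lt_irrefl _ hm

theorem rat_den_computable : Computable (fun q : ℚ => q.den) :=
  ((Computable.snd.comp Computable.unpair).comp rat_raw_computable).of_eq fun q => by simp [ratRaw]

theorem rat_num_computable : Computable (fun q : ℚ => q.num.toNat) := by
  have h1 : Primrec (fun k : ℕ => k.unpair.1) := Primrec.fst.comp Primrec.unpair
  have : Primrec (fun k : ℕ => if k.unpair.1 % 2 = 0 then k.unpair.1 / 2 else 0) :=
    Primrec.ite (Primrec.eq.comp (Primrec.nat_mod.comp h1 (Primrec.const 2)) (Primrec.const 0))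
      (Primrec.nat_div.comp h1 (Primrec.const 2)) (Primrec.const 0)
  exact (this.to_comp.comp rat_raw_computable).of_eq fun q => by
    simp only [ratRaw, Nat.unpair_pair]
    exact (encode_int_toNat _).symm

theorem primrec_pow : Primrec₂ (fun a b : ℕ => a ^ b) :=
  Primrec₂.unpaired'.1 Nat.Primrec.pow

theorem primrec_two_pow : Primrec (fun b : ℕ => 2 ^ b) :=
  primrec_pow.comp (Primrec.const 2) Primrec.id

/-- The positive natural number `2 ^ n`. -/
def twoPowP (n : ℕ) : ℕ+ := ⟨2 ^ n, by positivity⟩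

/-- Two-sided approximations from computability of a nonnegative real. -/
theorem approx_of_computableReal {F : ℝ} (hF0 : 0 ≤ F)
    (hF : ∃ f : ℕ+ → ℚ, Computable f ∧ ∀ n : ℕ+, |F - (f n : ℝ)| < 1 / (n : ℝ)) :
    ∃ u v : ℕ → ℕ, Computable u ∧ Computable v ∧ ∀ n, 0 < v n ∧ (u n : ℝ) / v n ≤ F ∧
      F ≤ (u n : ℝ) / v n + 2 / 2 ^ n := by
  obtain ⟨f, hf, hb⟩ := hF
  have hpn : Computable (fun n : ℕ => twoPowP n) := by
    have h1 : Primrec (fun n : ℕ => Denumerable.ofNat ℕ+ (2 ^ n - 1)) :=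
      (Primrec.ofNat ℕ+).comp (Primrec.nat_sub.comp primrec_two_pow (Primrec.const 1))
    refine h1.to_comp.of_eq fun n => ?_
    apply PNat.eq
    show (2 ^ n - 1) + 1 = 2 ^ n
    have : 0 < 2 ^ n := by positivity
    omega
  have hq := hf.comp hpn
  have hnum := rat_num_computable.comp hq
  have hden := rat_den_computable.comp hq
  refine ⟨fun n => (f (twoPowP n)).num.toNat * 2 ^ n - (f (twoPowP n)).den,
    fun n => (f (twoPowP n)).den * 2 ^ n, ?_, ?_, ?_⟩
  · exact (Primrec.nat_sub.to_comp).comp ((Primrec.nat_mul.to_comp).comp hnum primrec_two_pow.to_comp) hden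
  · exact (Primrec.nat_mul.to_comp).comp hden primrec_two_pow.to_comp
  · intro n
    beta_reduce
    have hb' := hb (twoPowP n)
    set q := f (twoPowP n) with hqdef
    have hcast : ((twoPowP n : ℕ) : ℝ) = (2:ℝ) ^ n := by simp [twoPowP]
    rw [hcast, abs_lt] at hb'
    have hd : (0 : ℝ) < q.den := by exact_mod_cast q.den_pos
    have h2 : (0 : ℝ) < 2 ^ n := by positivity
    have hqr : (q : ℝ) = q.num / q.den := by exact_mod_cast (Rat.num_div_den q).symm
    refine ⟨Nat.mul_pos q.den_pos (by positivity), ?_⟩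
    have key : (q.num : ℝ) / q.den - 1 / 2 ^ n = ((q.num : ℝ) * 2 ^ n - q.den) / (q.den * 2 ^ n) := by
      field_simp
    rcases le_or_gt q.den (q.num.toNat * 2 ^ n) with h | h
    · have hpos : 0 ≤ q.num := by
        by_contra hneg
        rw [Int.toNat_of_nonpos (by omega)] at h
        have := q.den_pos
        omega
      have e : ((q.num.toNat : ℕ) : ℝ) = (q.num : ℝ) := by
        exact_mod_cast Int.toNat_of_nonneg hpos
      push_cast [Nat.cast_sub h]
      rw [e, ← key, ← hqr]
      constructor
      · linarith
      · have : (2 : ℝ) / 2 ^ n = 1 / 2 ^ n + 1 / 2 ^ n := by ring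
        linarith
    · rw [Nat.sub_eq_zero_of_le h.le]
      simp only [Nat.cast_zero, zero_div, zero_add]
      refine ⟨hF0, ?_⟩
      have : (2 : ℝ) / 2 ^ n = 1 / 2 ^ n + 1 / 2 ^ n := by ring
      have h3 : (q.num : ℝ) * 2 ^ n ≤ q.den := by
        have a : (q.num : ℝ) ≤ (q.num.toNat : ℝ) := by exact_mod_cast Int.self_le_toNat _
        have b : ((q.num.toNat : ℝ)) * 2 ^ n ≤ q.den := by exact_mod_cast h.le
        nlinarith
      have h4 : (q : ℝ) ≤ 1 / 2 ^ n := by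
        rw [hqr, div_le_div_iff₀ hd h2]; linarith
      linarith


theorem exists_program_le {U : List Bool →. List Bool} {s p : List Bool} (h : s ∈ U p) :
    complexity U s ≤ p.length := Nat.sInf_le ⟨p, rfl, h⟩

theorem exists_min_program {U : List Bool →. List Bool} {s : List Bool} (h : ∃ p, s ∈ U p) :
    ∃ p, s ∈ U p ∧ p.length = complexity U s := by
  obtain ⟨p, hp⟩ := h
  have := Nat.sInf_mem (s := {n | ∃ p : List Bool, p.length = n ∧ s ∈ U p}) ⟨_, p, rfl, hp⟩
  obtain ⟨q, h1, h2⟩ := this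
  exact ⟨q, h2, h1⟩

theorem complexity_comp {U : List Bool →. List Bool} (hU : OptimalMachine U)
    {φ : List Bool →. List Bool} (hφ : Partrec φ) :
    ∃ d : ℕ, ∀ s s', (∃ p, s ∈ U p) → s' ∈ φ s → complexity U s' ≤ complexity U s + d := by
  obtain ⟨h1, h2, h3⟩ := hU
  obtain ⟨d, hd⟩ := h3 (fun p => (U p).bind φ) (h1.bind (hφ.comp Computable.snd).to₂) (by
    intro p q hp hq hpq
    exact h2 p q (Part.Dom.of_bind hp) (Part.Dom.of_bind hq) hpq)
  refine ⟨d, fun s s' hs hs' => ?_⟩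
  obtain ⟨p, hp, hl⟩ := exists_min_program hs
  obtain ⟨p', hp', hl'⟩ := hd p s' (Part.mem_bind_iff.2 ⟨s, hp, hs'⟩)
  have := exists_program_le hp'
  omega

/-- Value of a list of bits, least significant first. -/
def bitVal (l : List Bool) : ℕ := l.foldr (fun b acc => 2 * acc + cond b 1 0) 0

theorem bitVal_primrec : Primrec bitVal := by
  refine Primrec.list_foldr (f := fun l : List Bool => l) (g := fun _ => 0)
    (h := fun _ (x : Bool × ℕ) => 2 * x.2 + cond x.1 1 0) Primrec.id (Primrec.const 0) ?_
  have hb : Primrec (fun x : List Bool × (Bool × ℕ) => x.2.1) := Primrec.fst.comp Primrec.snd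
  have hn : Primrec (fun x : List Bool × (Bool × ℕ) => x.2.2) := Primrec.snd.comp Primrec.snd
  exact Primrec.nat_add.comp (Primrec.nat_mul.comp (Primrec.const 2) hn)
    (Primrec.cond hb (Primrec.const 1) (Primrec.const 0))

theorem exists_bits : ∀ (j n : ℕ), n < 2 ^ j → ∃ l : List Bool, l.length = j ∧ bitVal l = n
  | 0, n, h => ⟨[], rfl, by simp at h; simp [bitVal, h]⟩
  | j + 1, n, h => by
    obtain ⟨l, h1, h2⟩ := exists_bits j (n / 2) (by rw [pow_succ] at h; omega)
    refine ⟨decide (n % 2 = 1) :: l, by simp [h1], ?_⟩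
    have : bitVal (decide (n % 2 = 1) :: l) = 2 * bitVal l + cond (decide (n % 2 = 1)) 1 0 := rfl
    rw [this, h2]
    by_cases hn : n % 2 = 1
    · simp [hn]; omega
    · simp [hn]; omega

/-- Header length: number of leading `true`s. -/
def hdr (p : List Bool) : ℕ := p.idxOf false

/-- The number coded in the header. -/
def hdrVal (p : List Bool) : ℕ := bitVal ((p.drop (hdr p + 1)).take (hdr p))

/-- The payload. -/
def payload (p : List Bool) : ℕ := bitVal (p.drop (2 * hdr p + 1))

theorem hdr_primrec : Primrec hdr := Primrec.list_idxOf.comp (Primrec.const false) Primrec.id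

theorem hdrVal_primrec : Primrec hdrVal :=
  bitVal_primrec.comp (Primrec.list_take.comp hdr_primrec
    (Primrec.list_drop.comp (Primrec.succ.comp hdr_primrec) Primrec.id))

theorem payload_primrec : Primrec payload :=
  bitVal_primrec.comp (Primrec.list_drop.comp
    (Primrec.succ.comp (Primrec.nat_mul.comp (Primrec.const 2) hdr_primrec)) Primrec.id)

/-- The self-delimiting machine with payload width `w`. -/
def sdm (w : ℕ → ℕ) (φ : ℕ × ℕ →. List Bool) (p : List Bool) : Part (List Bool) :=
  bif decide (p.length = 2 * hdr p + 1 + w (hdrVal p)) then φ (hdrVal p, payload p) else Part.none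

theorem sdm_partrec {w : ℕ → ℕ} (hw : Computable w) {φ : ℕ × ℕ →. List Bool} (hφ : Partrec φ) :
    Partrec (sdm w φ) := by
  have h1 : Computable (fun p : List Bool => decide (p.length = 2 * hdr p + 1 + w (hdrVal p))) := by
    have e0 : PrimrecRel (fun a b : ℕ => a = b) := Primrec.eq
    have := e0.decide.to_comp
    refine Computable₂.comp this Computable.list_length ?_
    exact (Primrec.nat_add.to_comp).comp (Primrec.succ.comp (Primrec.nat_mul.comp (Primrec.const 2) hdr_primrec)).to_comp
      (hw.comp hdrVal_primrec.to_comp)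
  exact Partrec.cond h1 (hφ.comp (hdrVal_primrec.to_comp.pair payload_primrec.to_comp)) Partrec.none

theorem sdm_dom {w : ℕ → ℕ} {φ : ℕ × ℕ →. List Bool} {p : List Bool} (h : (sdm w φ p).Dom) :
    p.length = 2 * hdr p + 1 + w (hdrVal p) := by
  by_contra hc
  simp [sdm, hc] at h

theorem sdm_prefixFree (w : ℕ → ℕ) (φ : ℕ × ℕ →. List Bool) : PrefixFree (sdm w φ) := by
  rintro p q hp hq ⟨r, rfl⟩
  have h1 := sdm_dom hp
  have h2 := sdm_dom hq
  have hmem : false ∈ p := by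
    rw [← List.idxOf_lt_length_iff]
    show hdr p < _
    omega
  have hh : hdr (p ++ r) = hdr p := List.idxOf_append_of_mem hmem
  have hv : hdrVal (p ++ r) = hdrVal p := by
    unfold hdrVal
    rw [hh, List.drop_append_of_le_length (by omega), List.take_append_of_le_length]
    rw [List.length_drop]; omega
  rw [hh, hv, ← h1, List.length_append] at h2
  have : r = [] := List.length_eq_zero_iff.1 (by omega)
  simp [this]

theorem coding {U : List Bool →. List Bool} (hU : OptimalMachine U)
    {w : ℕ → ℕ} (hw : Computable w) {φ : ℕ × ℕ →. List Bool} (hφ : Partrec φ) :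
    ∃ d : ℕ, ∀ n j R s, n < 2 ^ j → R < 2 ^ w n → s ∈ φ (n, R) →
      ∃ p, s ∈ U p ∧ p.length ≤ 2 * j + 1 + w n + d := by
  obtain ⟨d, hd⟩ := hU.2.2 _ (sdm_partrec hw hφ) (sdm_prefixFree w φ)
  refine ⟨d, fun n j R s hn hR hs => ?_⟩
  obtain ⟨l1, hl1, hv1⟩ := exists_bits j n hn
  obtain ⟨l2, hl2, hv2⟩ := exists_bits _ R hR
  set p := List.replicate j true ++ (false :: (l1 ++ l2)) with hp
  have h1 : hdr p = j := by
    unfold hdr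
    rw [hp, List.idxOf_append_of_notMem (by simp)]
    simp
  have h0 : p.drop (j + 1) = l1 ++ l2 := by
    rw [hp, List.drop_append]; simp
  have h2 : hdrVal p = n := by
    unfold hdrVal
    rw [h1, h0, List.take_left' hl1, hv1]
  have h3 : payload p = R := by
    unfold payload
    rw [h1, show 2 * j + 1 = (j + 1) + j by ring, ← List.drop_drop, h0, List.drop_left' hl1, hv2]
  have h4 : p.length = 2 * j + 1 + w n := by
    simp [hp, hl1, hl2]; ring
  have : s ∈ sdm w φ p := by
    unfold sdm
    rw [h1, h2, h3, h4]; simpa using hs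
  obtain ⟨p', hp', hle⟩ := hd p s this
  exact ⟨p', hp', by omega⟩

theorem exists_program {U : List Bool →. List Bool} (hU : OptimalMachine U) (s : List Bool) :
    ∃ p, s ∈ U p := by
  have hφ : Partrec (fun x : ℕ × ℕ => ((Encodable.decode x.1 : Option (List Bool)) : Part (List Bool))) :=
    Computable.ofOption (Computable.decode.comp Computable.fst)
  obtain ⟨d, hd⟩ := coding hU (w := fun _ => 0) (Computable.const 0) hφ
  obtain ⟨p, hp, -⟩ := hd (Encodable.encode s) _ 0 s Nat.lt_two_pow_self (by simp) (by simp)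
  exact ⟨p, hp⟩

theorem prefixFree_unique {S : Set (List Bool)} (hS : ∀ p ∈ S, ∀ q ∈ S, p <+: q → p = q)
    (hnil : [] ∉ S) : InformationTheory.UniquelyDecodable S := by
  intro L₁
  induction L₁ with
  | nil =>
    intro L₂ _ h2 h
    cases L₂ with
    | nil => rfl
    | cons a L =>
      exfalso
      have ha := h2 a (by simp)
      simp at h
      exact hnil (h.1 ▸ ha)
  | cons a L ih =>
    intro L₂ h1 h2 h
    cases L₂ with
    | nil =>
      exfalso
      have ha := h1 a (by simp)
      simp at h
      exact hnil (h.1 ▸ ha)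
    | cons b M =>
      have ha := h1 a (by simp)
      have hb := h2 b (by simp)
      rw [List.flatten_cons, List.flatten_cons] at h
      have hab : a = b := by
        have p1 : a <+: b ++ M.flatten := ⟨_, h⟩
        have p2 : b <+: b ++ M.flatten := ⟨_, rfl⟩
        rcases List.prefix_or_prefix_of_prefix p1 p2 with h' | h'
        · exact hS a ha b hb h'
        · exact (hS b hb a ha h').symm
      subst hab
      have := ih M (fun w hw => h1 w (by simp [hw])) (fun w hw => h2 w (by simp [hw]))
        (List.append_cancel_left h)
      rw [this]

theorem kraft {U : List Bool →. List Bool} (hU : PrefixFree U) (S : Finset (List Bool))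
    (hS : ∀ p ∈ S, (U p).Dom) : ∑ p ∈ S, (2 : ℝ) ^ (-(p.length : ℝ)) ≤ 1 := by
  by_cases hnil : [] ∈ S
  · have : S = {[]} := by
      ext q
      simp only [Finset.mem_singleton]
      constructor
      · intro hq
        exact (hU [] q (hS _ hnil) (hS _ hq) (List.nil_prefix)).symm
      · rintro rfl; exact hnil
    rw [this]; simp
  · have := InformationTheory.kraft_mcmillan_inequality (S := S) (prefixFree_unique
      (fun p hp q hq h => hU p q (hS p hp) (hS q hq) h) hnil)
    refine le_trans (le_of_eq ?_) this
    apply Finset.sum_congr rfl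
    intro p _
    rw [Real.rpow_neg (by norm_num), Real.rpow_natCast]
    simp

theorem enumeration {U : List Bool →. List Bool} (hU : OptimalMachine U) :
    ∃ E : ℕ → List (List Bool × List Bool), Computable E ∧ (∀ k, ((E k).map Prod.fst).Nodup) ∧
      (∀ k p s, (p, s) ∈ E k → s ∈ U p) ∧ (∀ k k', k ≤ k' → E k ⊆ E k') ∧
      (∀ p s, s ∈ U p → ∃ k, (p, s) ∈ E k) ∧
      ∃ x ∈ E 0, ∃ y ∈ E 0, x.1 ≠ y.1 := by
  obtain ⟨c, hc⟩ := Nat.Partrec.Code.exists_code.1 hU.1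
  have hc1 : ∀ p : List Bool, Nat.Partrec.Code.eval c (Encodable.encode p) =
      (U p).map Encodable.encode := by
    intro p
    rw [hc]; simp
  let g : ℕ → ℕ → Option (List Bool × List Bool) := fun k i =>
    (Encodable.decode₂ (List Bool) i).bind fun p =>
      (Nat.Partrec.Code.evaln k c (Encodable.encode p)).bind fun o => (Encodable.decode o : Option (List Bool)).map fun s => (p, s)
  have hgmem : ∀ k i p s, g k i = some (p, s) ↔ Encodable.decode₂ (List Bool) i = some p ∧
      Nat.Partrec.Code.evaln k c (Encodable.encode p) = some (Encodable.encode s) := by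
    intro k i p s
    simp only [g, Option.bind_eq_some_iff, Option.map_eq_some_iff, Prod.mk.injEq]
    constructor
    · rintro ⟨p', hp', o, ho, s', hs', rfl, rfl⟩
      refine ⟨hp', ?_⟩
      have h1 := Nat.Partrec.Code.evaln_sound ho
      rw [hc1] at h1
      obtain ⟨s'', _, rfl⟩ := (Part.mem_map_iff _).1 h1
      rw [Encodable.encodek] at hs'
      cases hs'
      exact ho
    · rintro ⟨h1, h2⟩
      exact ⟨p, h1, _, h2, s, Encodable.encodek _, rfl, rfl⟩
  have hgp : Primrec₂ g := by
    refine Primrec.option_bind (Primrec.decode₂.comp Primrec.snd) ?_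
    refine Primrec.option_bind ?_ ?_
    · exact Nat.Partrec.Code.primrec_evaln.comp (Primrec.pair (Primrec.pair (Primrec.fst.comp Primrec.fst) (Primrec.const c))
        (Primrec.encode.comp Primrec.snd))
    · refine Primrec.option_map (Primrec.decode.comp Primrec.snd) ?_
      exact Primrec.pair (Primrec.snd.comp (Primrec.fst.comp Primrec.fst)) Primrec.snd
  let E0 : ℕ → List (List Bool × List Bool) := fun k => (List.range k).filterMap (g k)
  have hE0 : Primrec E0 := Primrec.listFilterMap Primrec.list_range hgp
  have hmem : ∀ k p s, (p, s) ∈ E0 k ↔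
      Nat.Partrec.Code.evaln k c (Encodable.encode p) = some (Encodable.encode s) := by
    intro k p s
    simp only [E0, List.mem_filterMap, List.mem_range, hgmem]
    constructor
    · rintro ⟨i, _, _, h⟩; exact h
    · intro h
      exact ⟨Encodable.encode p, Nat.Partrec.Code.evaln_bound h, Encodable.encodek₂ _, h⟩
  have hmono : ∀ k k', k ≤ k' → E0 k ⊆ E0 k' := by
    rintro k k' hk ⟨p, s⟩ h
    rw [hmem] at h ⊢
    exact Nat.Partrec.Code.evaln_mono hk h
  have hcompl : ∀ p s, s ∈ U p → ∃ k, (p, s) ∈ E0 k := by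
    intro p s h
    have : Encodable.encode s ∈ Nat.Partrec.Code.eval c (Encodable.encode p) := by
      rw [hc1]; exact Part.mem_map _ h
    obtain ⟨k, hk⟩ := Nat.Partrec.Code.evaln_complete.1 this
    exact ⟨k, (hmem _ _ _).2 hk⟩
  have hsound : ∀ k p s, (p, s) ∈ E0 k → s ∈ U p := by
    intro k p s h
    have h1 := Nat.Partrec.Code.evaln_sound ((hmem _ _ _).1 h)
    rw [hc1] at h1
    obtain ⟨s', h2, h3⟩ := (Part.mem_map_iff _).1 h1
    rw [Encodable.encode_injective h3] at h2
    exact h2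
  have hnodup : ∀ k, ((E0 k).map Prod.fst).Nodup := by
    intro k
    simp only [E0, List.map_filterMap]
    refine List.Nodup.filterMap ?_ List.nodup_range
    intro i i' p h1 h2
    simp only [Option.mem_def, Option.map_eq_some_iff] at h1 h2
    obtain ⟨⟨p1, s1⟩, h1, rfl⟩ := h1
    obtain ⟨⟨p2, s2⟩, h2, h3⟩ := h2
    simp only at h3
    subst h3
    rw [hgmem] at h1 h2
    exact (Encodable.mem_decode₂.1 h1.1).symm.trans (Encodable.mem_decode₂.1 h2.1)
  obtain ⟨p1, hp1⟩ := exists_program hU []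
  obtain ⟨p2, hp2⟩ := exists_program hU [true]
  obtain ⟨k1, hk1⟩ := hcompl _ _ hp1
  obtain ⟨k2, hk2⟩ := hcompl _ _ hp2
  refine ⟨fun k => E0 (k + (k1 + k2)), ?_, fun k => hnodup _, fun k => hsound _,
    fun k k' h => hmono _ _ (by omega), ?_, ?_⟩
  · exact (hE0.comp (Primrec.nat_add.comp Primrec.id (Primrec.const (k1 + k2)))).to_comp
  · intro p s h
    obtain ⟨k, hk⟩ := hcompl p s h
    exact ⟨k, hmono _ _ (by omega) hk⟩
  · refine ⟨_, hmono _ (0 + (k1 + k2)) (by omega) hk1, _, hmono _ (0 + (k1 + k2)) (by omega) hk2, ?_⟩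
    intro h
    simp only at h
    subst h
    have := Part.mem_unique hp1 hp2
    simp at this


/-- Finite partition sums. -/
noncomputable def Zs (S : Finset (List Bool)) (t : ℝ) : ℝ :=
  ∑ p ∈ S, (2 : ℝ) ^ (-(p.length : ℝ) / t)

/-- Finite Kraft condition. -/
def KraftOn (S : Finset (List Bool)) : Prop := ∑ p ∈ S, (2 : ℝ) ^ (-(p.length : ℝ)) ≤ 1

theorem term_mono {l : ℕ} {t t' : ℝ} (ht : 0 < t) (h : t ≤ t') :
    (2 : ℝ) ^ (-(l : ℝ) / t) ≤ 2 ^ (-(l : ℝ) / t') := by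
  apply Real.rpow_le_rpow_of_exponent_le (by norm_num)
  rw [neg_div, neg_div, neg_le_neg_iff]
  gcongr

theorem Zs_mono {S : Finset (List Bool)} {t t' : ℝ} (ht : 0 < t) (h : t ≤ t') : Zs S t ≤ Zs S t' :=
  Finset.sum_le_sum fun _ _ => term_mono ht h

theorem Zs_subset {S S' : Finset (List Bool)} (h : S ⊆ S') (t : ℝ) : Zs S t ≤ Zs S' t :=
  Finset.sum_le_sum_of_subset_of_nonneg h fun _ _ _ => by positivity

theorem Zs_le_one {S : Finset (List Bool)} (hS : KraftOn S) {t : ℝ} (ht : 0 < t) (h : t ≤ 1) :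
    Zs S t ≤ 1 := by
  refine (Zs_mono ht h).trans ?_
  simpa [Zs, KraftOn] using hS

theorem term_le_Zs {S : Finset (List Bool)} {p : List Bool} (hp : p ∈ S) (t : ℝ) :
    (2 : ℝ) ^ (-(p.length : ℝ) / t) ≤ Zs S t :=
  Finset.single_le_sum (f := fun p : List Bool => (2 : ℝ) ^ (-(p.length : ℝ) / t))
    (fun _ _ => by positivity) hp

theorem Zs_diff_mono {S S' : Finset (List Bool)} (hS : S ⊆ S') {t t' : ℝ} (ht : 0 < t) (h : t ≤ t') :
    Zs S' t - Zs S t ≤ Zs S' t' - Zs S t' := by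
  unfold Zs
  rw [← Finset.sum_sdiff hS, ← Finset.sum_sdiff hS, add_sub_cancel_right, add_sub_cancel_right]
  exact Zs_mono ht h

theorem rpow_ge_entropy {w r : ℝ} (hw : 0 < w) (hr : r ≤ 1) :
    w + (1 - r) * (w * (1 - w)) ≤ w ^ r := by
  have h1 : w ^ r = w * Real.exp (-(1 - r) * Real.log w) := by
    rw [Real.rpow_def_of_pos hw]
    nth_rewrite 2 [← Real.exp_log hw]
    rw [← Real.exp_add]; ring_nf
  have h2 := Real.add_one_le_exp (-(1 - r) * Real.log w)
  have h3 := Real.log_le_sub_one_of_pos hw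
  have h4 : (1 - r) * (1 - w) ≤ (1 - r) * (-Real.log w) :=
    mul_le_mul_of_nonneg_left (by linarith) (by linarith)
  rw [h1]
  calc w + (1 - r) * (w * (1 - w)) = w * (1 + (1 - r) * (1 - w)) := by ring
    _ ≤ _ := mul_le_mul_of_nonneg_left (by linarith) hw.le

theorem entropy_growth {S : Finset (List Bool)} (hS : KraftOn S) {p1 p2 : List Bool}
    (h1 : p1 ∈ S) (h2 : p2 ∈ S) (hne : p1 ≠ p2) {T t t' : ℝ} (hT : 0 < T) (hTt : T ≤ t)
    (htt : t ≤ t') (ht1 : t' ≤ 1) :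
    (2 : ℝ) ^ (-(p1.length : ℝ) / T) * 2 ^ (-(p2.length : ℝ) / T) / 2 * (t' - t) ≤
      t' * Real.log (Zs S t') - t * Real.log (Zs S t) := by
  have ht : 0 < t := hT.trans_le hTt
  have ht' : 0 < t' := ht.trans_le htt
  set c := (2 : ℝ) ^ (-(p1.length : ℝ) / T) * 2 ^ (-(p2.length : ℝ) / T) with hc
  have hc0 : 0 < c := by positivity
  set Z := Zs S t with hZ
  have hZ0 : 0 < Z := lt_of_lt_of_le (by positivity) (term_le_Zs h1 t)
  have hZ1 : Z ≤ 1 := Zs_le_one hS ht (htt.trans ht1)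
  set r := t / t' with hr
  have hr0 : 0 < r := by positivity
  have hr1 : r ≤ 1 := by rw [hr, div_le_one ht']; exact htt
  set w : List Bool → ℝ := fun p => (2 : ℝ) ^ (-(p.length : ℝ) / t) / Z with hw
  have hw0 : ∀ p, 0 < w p := fun p => by positivity
  have hwsum : ∑ p ∈ S, w p = 1 := by
    rw [hw, ← Finset.sum_div]; exact div_self hZ0.ne'
  have hwle : ∀ p ∈ S, w p ≤ 1 := fun p hp => by
    rw [hw]; simp only; rw [div_le_one hZ0]; exact term_le_Zs hp t
  have hwge : ∀ p, (2 : ℝ) ^ (-(p.length : ℝ) / T) ≤ w p := fun p => by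
    rw [hw]; simp only
    rw [le_div_iff₀ hZ0]
    calc _ ≤ (2 : ℝ) ^ (-(p.length : ℝ) / T) * 1 := by gcongr
      _ ≤ _ := by rw [mul_one]; exact term_mono hT hTt
  have hw12 : w p1 + w p2 ≤ 1 := by
    rw [← hwsum, ← Finset.sum_pair hne]
    exact Finset.sum_le_sum_of_subset_of_nonneg (by
      intro x hx; simp at hx; rcases hx with rfl | rfl <;> assumption) fun p _ _ => (hw0 p).le
  have hent : c ≤ ∑ p ∈ S, w p * (1 - w p) := by
    calc c ≤ w p1 * w p2 := mul_le_mul (hwge _) (hwge _) (by positivity) (hw0 _).le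
      _ ≤ w p1 * (1 - w p1) := mul_le_mul_of_nonneg_left (by linarith) (hw0 _).le
      _ ≤ _ := Finset.single_le_sum (f := fun p => w p * (1 - w p))
        (fun p hp => mul_nonneg (hw0 p).le (by linarith [hwle p hp])) h1
  have hsum : 1 + (1 - r) * c ≤ ∑ p ∈ S, w p ^ r := by
    calc 1 + (1 - r) * c ≤ ∑ p ∈ S, w p + (1 - r) * ∑ p ∈ S, w p * (1 - w p) := by
          rw [hwsum]
          have := mul_le_mul_of_nonneg_left hent (sub_nonneg.2 hr1)
          linarith
      _ = ∑ p ∈ S, (w p + (1 - r) * (w p * (1 - w p))) := by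
          rw [Finset.sum_add_distrib, Finset.mul_sum]
      _ ≤ _ := Finset.sum_le_sum fun p _ => rpow_ge_entropy (hw0 p) hr1
  have hsumeq : ∑ p ∈ S, w p ^ r = Zs S t' / Z ^ r := by
    rw [Zs, Finset.sum_div]
    refine Finset.sum_congr rfl fun p _ => ?_
    rw [hw]; simp only
    rw [Real.div_rpow (by positivity) hZ0.le, ← Real.rpow_mul (by norm_num)]
    congr 2
    rw [hr]; field_simp
  have hZ'0 : 0 < Zs S t' := lt_of_lt_of_le (by positivity) (term_le_Zs h1 t')
  have hlog : Real.log (∑ p ∈ S, w p ^ r) = Real.log (Zs S t') - r * Real.log Z := by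
    rw [hsumeq, Real.log_div hZ'0.ne' (by positivity), Real.log_rpow hZ0]
  have hc1 : c ≤ 1 := by
    calc c ≤ w p1 * w p2 := mul_le_mul (hwge _) (hwge _) (by positivity) (hw0 _).le
      _ ≤ 1 * 1 := mul_le_mul (hwle _ h1) (hwle _ h2) (hw0 _).le (by norm_num)
      _ = 1 := by norm_num
  set x := (1 - r) * c with hx
  have hx0 : 0 ≤ x := mul_nonneg (by linarith) hc0.le
  have hx1 : x ≤ 1 := by nlinarith
  have hl2 : x / 2 ≤ Real.log (∑ p ∈ S, w p ^ r) := by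
    calc x / 2 ≤ 1 - (1 + x)⁻¹ := by
          rw [le_sub_iff_add_le, ← le_sub_iff_add_le', inv_le_iff_one_le_mul₀ (by linarith)]
          nlinarith
      _ ≤ Real.log (1 + x) := Real.one_sub_inv_le_log_of_pos (by linarith)
      _ ≤ _ := Real.log_le_log (by linarith) hsum
  rw [hlog] at hl2
  have := mul_le_mul_of_nonneg_left hl2 ht'.le
  have e1 : t' * (Real.log (Zs S t') - r * Real.log Z) = t' * Real.log (Zs S t') - t * Real.log Z := by
    rw [hr]; field_simp
  have e2 : t' * (x / 2) = c / 2 * (t' - t) := by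
    rw [hx, hr]; field_simp
  rw [e1, e2] at this
  exact this

theorem Zs_lipschitz {S : Finset (List Bool)} (hS : KraftOn S) {T t t1 : ℝ} (hT : 0 < T)
    (hTt : T ≤ t) (htt : t ≤ t1) (ht1 : t1 < 1) :
    Zs S t - Zs S T ≤ 1 / ((1 / t1 - 1) * T ^ 2) * (t - T) := by
  have ht : 0 < t := hT.trans_le hTt
  have ht1' : 0 < t1 := ht.trans_le htt
  set γ := 1 / t1 - 1 with hγ
  have hγ0 : 0 < γ := by rw [hγ, sub_pos, lt_div_iff₀ ht1']; linarith
  have key : ∀ p : List Bool, (2 : ℝ) ^ (-(p.length : ℝ) / t) - 2 ^ (-(p.length : ℝ) / T) ≤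
      (2 : ℝ) ^ (-(p.length : ℝ)) * (1 / (γ * T ^ 2) * (t - T)) := by
    intro p
    set l : ℝ := (p.length : ℝ) with hl
    have hl0 : 0 ≤ l := by positivity
    have hlog2 : 0 < Real.log 2 := Real.log_pos (by norm_num)
    set y := l * (1 / T - 1 / t) * Real.log 2 with hy
    have a1 : (2 : ℝ) ^ (-l / T) = 2 ^ (-l / t) * Real.exp (-y) := by
      rw [Real.rpow_def_of_pos (by norm_num), Real.rpow_def_of_pos (by norm_num), ← Real.exp_add, hy]
      ring_nf
    have a2 : 1 - Real.exp (-y) ≤ y := by linarith [Real.add_one_le_exp (-y)]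
    have a3 : (2 : ℝ) ^ (-l / t) ≤ 2 ^ (-l / t1) := term_mono ht htt
    have a4 : (2 : ℝ) ^ (-l / t1) = 2 ^ (-l) * Real.exp (-(γ * l * Real.log 2)) := by
      rw [Real.rpow_def_of_pos (by norm_num), Real.rpow_def_of_pos (by norm_num), ← Real.exp_add, hγ]
      ring_nf
    have a5 : Real.exp (-(γ * l * Real.log 2)) * (γ * l * Real.log 2) ≤ 1 := by
      have := Real.add_one_le_exp (γ * l * Real.log 2)
      rw [Real.exp_neg, inv_mul_le_iff₀ (Real.exp_pos _)]
      linarith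
    have hTt' : 1 / T - 1 / t ≤ (t - T) / T ^ 2 := by
      rw [div_sub_div _ _ hT.ne' ht.ne']
      rw [one_mul, mul_one]
      apply div_le_div_of_nonneg_left (by linarith) (by positivity)
      nlinarith
    have hy0 : 0 ≤ y := by
      apply mul_nonneg (mul_nonneg hl0 _) hlog2.le
      rw [sub_nonneg]; exact one_div_le_one_div_of_le hT hTt
    calc (2 : ℝ) ^ (-l / t) - 2 ^ (-l / T) = 2 ^ (-l / t) * (1 - Real.exp (-y)) := by rw [a1]; ring
      _ ≤ 2 ^ (-l / t) * y := mul_le_mul_of_nonneg_left a2 (by positivity)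
      _ ≤ 2 ^ (-l / t1) * y := mul_le_mul_of_nonneg_right a3 hy0
      _ ≤ 2 ^ (-l / t1) * (l * ((t - T) / T ^ 2) * Real.log 2) := by
          rw [hy]; gcongr
      _ = 2 ^ (-l) * ((Real.exp (-(γ * l * Real.log 2)) * (γ * l * Real.log 2)) * (1 / (γ * T ^ 2) * (t - T))) := by
          rw [a4]; field_simp
      _ ≤ 2 ^ (-l) * (1 * (1 / (γ * T ^ 2) * (t - T))) := by
          have : 0 ≤ 1 / (γ * T ^ 2) * (t - T) := mul_nonneg (by positivity) (by linarith)
          gcongr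
      _ = _ := by rw [one_mul]
  unfold Zs
  rw [← Finset.sum_sub_distrib]
  refine (Finset.sum_le_sum fun p _ => key p).trans ?_
  rw [← Finset.sum_mul]
  have : 0 ≤ 1 / (γ * T ^ 2) * (t - T) := mul_nonneg (by positivity) (by linarith)
  calc _ ≤ 1 * (1 / (γ * T ^ 2) * (t - T)) := mul_le_mul_of_nonneg_right hS this
    _ = _ := one_mul _

theorem Zs_rpow_le (S : Finset (List Bool)) {τ : ℝ} (h0 : 0 < τ) (h1 : τ ≤ 1) :
    Zs S τ ^ τ ≤ ∑ p ∈ S, (2 : ℝ) ^ (-(p.length : ℝ)) := by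
  unfold Zs
  induction S using Finset.induction_on with
  | empty => simp [Real.zero_rpow h0.ne']
  | insert a s ha ih =>
    rw [Finset.sum_insert ha, Finset.sum_insert ha]
    refine (Real.rpow_add_le_add_rpow (by positivity) (by positivity) h0.le h1).trans ?_
    have : ((2 : ℝ) ^ (-(a.length : ℝ) / τ)) ^ τ = 2 ^ (-(a.length : ℝ)) := by
      rw [← Real.rpow_mul (by norm_num)]; congr 1; field_simp
    rw [this]
    linarith


/-- Integer approximation from below of `2 ^ m * 2 ^ (-l / (a / 2 ^ b))`. -/
def xa (l a b m : ℕ) : ℕ :=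
  Nat.findGreatest (fun x => x ^ a * 2 ^ (l * 2 ^ b) ≤ 2 ^ (m * a)) (2 ^ m)

/-- Integer approximation from below of a finite partition sum. -/
def NN (L : List (List Bool × List Bool)) (a b m : ℕ) : ℕ :=
  L.foldr (fun q s => xa q.1.length a b m + s) 0

theorem xa_primrec : Primrec (fun q : ℕ × ℕ × ℕ × ℕ => xa q.1 q.2.1 q.2.2.1 q.2.2.2) := by
  unfold xa
  refine Primrec.nat_findGreatest
    (p := fun (q : ℕ × ℕ × ℕ × ℕ) x => x ^ q.2.1 * 2 ^ (q.1 * 2 ^ q.2.2.1) ≤ 2 ^ (q.2.2.2 * q.2.1)) ?_ ?_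
  · exact primrec_two_pow.comp (Primrec.snd.comp (Primrec.snd.comp Primrec.snd))
  · have h1 : Primrec (fun z : (ℕ × ℕ × ℕ × ℕ) × ℕ => z.1.1) := Primrec.fst.comp Primrec.fst
    have h2 : Primrec (fun z : (ℕ × ℕ × ℕ × ℕ) × ℕ => z.1.2.1) :=
      Primrec.fst.comp (Primrec.snd.comp Primrec.fst)
    have h3 : Primrec (fun z : (ℕ × ℕ × ℕ × ℕ) × ℕ => z.1.2.2.1) :=
      Primrec.fst.comp (Primrec.snd.comp (Primrec.snd.comp Primrec.fst))
    have h4 : Primrec (fun z : (ℕ × ℕ × ℕ × ℕ) × ℕ => z.1.2.2.2) :=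
      Primrec.snd.comp (Primrec.snd.comp (Primrec.snd.comp Primrec.fst))
    exact Primrec.nat_le.comp
      (Primrec.nat_mul.comp (primrec_pow.comp Primrec.snd h2)
        (primrec_two_pow.comp (Primrec.nat_mul.comp h1 (primrec_two_pow.comp h3))))
      (primrec_two_pow.comp (Primrec.nat_mul.comp h4 h2))

theorem NN_primrec :
    Primrec (fun q : List (List Bool × List Bool) × ℕ × ℕ × ℕ => NN q.1 q.2.1 q.2.2.1 q.2.2.2) := by
  unfold NN
  refine Primrec.list_foldr (f := fun q : List (List Bool × List Bool) × ℕ × ℕ × ℕ => q.1)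
    (g := fun _ => 0)
    (h := fun (q : List (List Bool × List Bool) × ℕ × ℕ × ℕ) z =>
      xa z.1.1.length q.2.1 q.2.2.1 q.2.2.2 + z.2) Primrec.fst (Primrec.const 0) ?_
  refine Primrec.nat_add.comp (xa_primrec.comp (Primrec.pair ?_ ?_)) ?_
  · exact Primrec.list_length.comp (Primrec.fst.comp (Primrec.fst.comp Primrec.snd))
  · exact Primrec.snd.comp Primrec.fst
  · exact Primrec.snd.comp Primrec.snd

theorem xa_bounds (l a b m : ℕ) (ha : 0 < a) :
    (xa l a b m : ℝ) ≤ 2 ^ m * (2 : ℝ) ^ (-(l : ℝ) / ((a : ℝ) / 2 ^ b)) ∧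
      (2 : ℝ) ^ m * (2 : ℝ) ^ (-(l : ℝ) / ((a : ℝ) / 2 ^ b)) ≤ xa l a b m + 1 := by
  set y : ℝ := 2 ^ m * (2 : ℝ) ^ (-(l : ℝ) / ((a : ℝ) / 2 ^ b)) with hy
  have hy0 : 0 < y := by positivity
  have ha' : (0 : ℝ) < a := by exact_mod_cast ha
  have hpow : y ^ a * 2 ^ (l * 2 ^ b) = 2 ^ (m * a) := by
    rw [hy, mul_pow, ← pow_mul, ← Real.rpow_natCast ((2 : ℝ) ^ (_ : ℝ)), ← Real.rpow_mul (by norm_num),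
      ← Real.rpow_natCast 2 (l * 2 ^ b), mul_assoc, ← Real.rpow_add (by norm_num)]
    have : -(l : ℝ) / ((a : ℝ) / 2 ^ b) * a + ((l * 2 ^ b : ℕ) : ℝ) = 0 := by
      push_cast; field_simp; ring
    rw [this]; simp
  have hiff : ∀ x : ℕ, x ^ a * 2 ^ (l * 2 ^ b) ≤ 2 ^ (m * a) ↔ (x : ℝ) ≤ y := by
    intro x
    have : (x ^ a * 2 ^ (l * 2 ^ b) ≤ 2 ^ (m * a)) ↔ ((x : ℝ) ^ a * 2 ^ (l * 2 ^ b) ≤ 2 ^ (m * a)) := by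
      exact_mod_cast Iff.rfl
    rw [this, ← hpow, mul_le_mul_iff_left₀ (by positivity), pow_le_pow_iff_left₀ (by positivity) hy0.le ha.ne']
  have hym : y ≤ 2 ^ m := by
    rw [hy]
    have : (2 : ℝ) ^ (-(l : ℝ) / ((a : ℝ) / 2 ^ b)) ≤ 1 := by
      apply Real.rpow_le_one_of_one_le_of_nonpos (by norm_num)
      apply div_nonpos_of_nonpos_of_nonneg <;> [simp; positivity]
    nlinarith [show (0:ℝ) < 2 ^ m by positivity]
  constructor
  · rw [← hiff]
    exact Nat.findGreatest_spec (P := fun x => x ^ a * 2 ^ (l * 2 ^ b) ≤ 2 ^ (m * a)) (m := 0)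
      (Nat.zero_le _) (by simp [ha.ne'])
  · by_cases h : xa l a b m + 1 ≤ 2 ^ m
    · have := Nat.findGreatest_is_greatest (P := fun x => x ^ a * 2 ^ (l * 2 ^ b) ≤ 2 ^ (m * a))
        (Nat.lt_succ_self (xa l a b m)) h
      rw [hiff] at this
      push_cast at this
      linarith
    · have : (2 : ℝ) ^ m ≤ (xa l a b m + 1 : ℕ) := by
        push Not at h
        exact_mod_cast h.le
      push_cast at this
      linarith

theorem NN_bounds (L : List (List Bool × List Bool)) (hL : (L.map Prod.fst).Nodup) (a b m : ℕ)
    (ha : 0 < a) :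
    (NN L a b m : ℝ) ≤ 2 ^ m * Zs (L.map Prod.fst).toFinset ((a : ℝ) / 2 ^ b) ∧
      (2 : ℝ) ^ m * Zs (L.map Prod.fst).toFinset ((a : ℝ) / 2 ^ b) ≤ NN L a b m + L.length := by
  unfold Zs
  rw [List.sum_toFinset _ hL]
  clear hL
  induction L with
  | nil => simp [NN]
  | cons q L ih =>
    have h := xa_bounds q.1.length a b m ha
    have e : NN (q :: L) a b m = xa q.1.length a b m + NN L a b m := rfl
    rw [e]
    simp only [List.map_cons, List.sum_cons, mul_add, List.length_cons]
    push_cast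
    constructor <;> linarith [ih.1, ih.2, h.1, h.2]

/-- The bookkeeping data extracted from an optimal machine and the computability of `F`. -/
structure Sys (U : List Bool →. List Bool) (T : ℝ) where
  E : ℕ → List (List Bool × List Bool)
  u : ℕ → ℕ
  v : ℕ → ℕ
  x1 : List Bool
  x2 : List Bool
  hU : OptimalMachine U
  hT0 : 0 < T
  hT1 : T < 1
  hE : Computable E
  hu : Computable u
  hv : Computable v
  nodup : ∀ k, ((E k).map Prod.fst).Nodup
  sound : ∀ k p s, (p, s) ∈ E k → s ∈ U p
  mono : ∀ k k', k ≤ k' → E k ⊆ E k'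
  complete : ∀ p s, s ∈ U p → ∃ k, (p, s) ∈ E k
  m1 : ∃ s, (x1, s) ∈ E 0
  m2 : ∃ s, (x2, s) ∈ E 0
  hne : x1 ≠ x2
  huv : ∀ n, 0 < v n ∧ (u n : ℝ) / v n ≤ Ffun U T ∧ Ffun U T ≤ (u n : ℝ) / v n + 2 / 2 ^ n

theorem kraft_sub {U : List Bool →. List Bool} (hU : PrefixFree U) {t : ℝ} (ht : 0 < t) (ht1 : t ≤ 1)
    (u : Finset {p : List Bool // (U p).Dom}) :
    ∑ p ∈ u, (2 : ℝ) ^ (-((p : List Bool).length : ℝ) / t) ≤ 1 := by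
  have h := kraft hU (u.map (Function.Embedding.subtype _)) (by
    intro p hp
    simp only [Finset.mem_map, Function.Embedding.subtype_apply] at hp
    obtain ⟨q, _, rfl⟩ := hp
    exact q.2)
  have h2 := Zs_le_one (S := u.map (Function.Embedding.subtype _)) h ht ht1
  simpa [Zs] using h2

theorem Z_summable {U : List Bool →. List Bool} (hU : PrefixFree U) {t : ℝ} (ht : 0 < t) (ht1 : t ≤ 1) :
    Summable (fun p : {p : List Bool // (U p).Dom} => (2 : ℝ) ^ (-((p : List Bool).length : ℝ) / t)) :=
  summable_of_sum_le (fun _ => by positivity) (kraft_sub hU ht ht1)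

theorem Zfun_le_one {U : List Bool →. List Bool} (hU : PrefixFree U) {t : ℝ} (ht : 0 < t) (ht1 : t ≤ 1) :
    Zfun U t ≤ 1 :=
  (Z_summable hU ht ht1).tsum_le_of_sum_le (kraft_sub hU ht ht1)

theorem Zs_le_Zfun {U : List Bool →. List Bool} (hU : PrefixFree U) {t : ℝ} (ht : 0 < t) (ht1 : t ≤ 1)
    (S : Finset (List Bool)) (hS : ∀ p ∈ S, (U p).Dom) : Zs S t ≤ Zfun U t := by
  classical
  have h := (Z_summable hU ht ht1).sum_le_tsum (S.subtype (fun p => (U p).Dom)) (fun _ _ => by positivity)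
  have e : Zs S t = ∑ p ∈ S.subtype (fun p => (U p).Dom),
      (2 : ℝ) ^ (-((p : List Bool).length : ℝ) / t) := by
    rw [Zs, Finset.sum_subtype_of_mem (fun p : List Bool => (2 : ℝ) ^ (-(p.length : ℝ) / t)) hS]
  rw [e]; exact h

namespace Sys

variable {U : List Bool →. List Bool} {T : ℝ} (Y : Sys U T)

/-- The programs enumerated by stage `k`. -/
def D (k : ℕ) : Finset (List Bool) := ((Y.E k).map Prod.fst).toFinset

theorem mem_D {k : ℕ} {p : List Bool} : p ∈ Y.D k ↔ ∃ s, (p, s) ∈ Y.E k := by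
  simp [D]

theorem D_mono {k k' : ℕ} (h : k ≤ k') : Y.D k ⊆ Y.D k' := by
  intro p hp
  rw [mem_D] at hp ⊢
  obtain ⟨s, hs⟩ := hp
  exact ⟨s, Y.mono k k' h hs⟩

theorem D_dom {k : ℕ} {p : List Bool} (h : p ∈ Y.D k) : (U p).Dom := by
  rw [mem_D] at h
  obtain ⟨s, hs⟩ := h
  exact Part.dom_iff_mem.2 ⟨s, Y.sound _ _ _ hs⟩

theorem D_complete {p : List Bool} (h : (U p).Dom) : ∃ k, p ∈ Y.D k := by
  obtain ⟨s, hs⟩ := Part.dom_iff_mem.1 h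
  obtain ⟨k, hk⟩ := Y.complete p s hs
  exact ⟨k, Y.mem_D.2 ⟨s, hk⟩⟩

theorem mem1 (k : ℕ) : Y.x1 ∈ Y.D k := Y.D_mono (Nat.zero_le k) (Y.mem_D.2 Y.m1)

theorem mem2 (k : ℕ) : Y.x2 ∈ Y.D k := Y.D_mono (Nat.zero_le k) (Y.mem_D.2 Y.m2)

theorem kr (k : ℕ) : KraftOn (Y.D k) := kraft Y.hU.2.1 _ fun _ hp => Y.D_dom hp

theorem Zk_le (k : ℕ) {t : ℝ} (ht : 0 < t) (ht1 : t ≤ 1) : Zs (Y.D k) t ≤ Zfun U t :=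
  Zs_le_Zfun Y.hU.2.1 ht ht1 _ fun _ hp => Y.D_dom hp

theorem Zk_new (k : ℕ) {p : List Bool} (hp : p ∉ Y.D k) (hd : (U p).Dom) :
    Zs (Y.D k) T + (2 : ℝ) ^ (-(p.length : ℝ) / T) ≤ Zfun U T := by
  have := Zs_le_Zfun Y.hU.2.1 Y.hT0 Y.hT1.le (insert p (Y.D k)) (by
    intro q hq
    rcases Finset.mem_insert.1 hq with rfl | hq
    · exact hd
    · exact Y.D_dom hq)
  rw [Zs, Finset.sum_insert hp] at this
  rw [add_comm]; exact this

theorem subset_D (S : Finset (List Bool)) (hS : ∀ p ∈ S, (U p).Dom) : ∃ k, S ⊆ Y.D k := by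
  classical
  induction S using Finset.induction_on with
  | empty => exact ⟨0, by simp⟩
  | insert a s ha ih =>
    obtain ⟨k, hk⟩ := ih fun p hp => hS p (Finset.mem_insert_of_mem hp)
    obtain ⟨k', hk'⟩ := Y.D_complete (hS a (Finset.mem_insert_self _ _))
    refine ⟨max k k', Finset.insert_subset (Y.D_mono (le_max_right _ _) hk') ?_⟩
    exact hk.trans (Y.D_mono (le_max_left _ _))

theorem Zk_tendsto {t : ℝ} (ht : 0 < t) (ht1 : t ≤ 1) {ε : ℝ} (hε : 0 < ε) :
    ∃ k, Zfun U t - Zs (Y.D k) t < ε := by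
  have h := (Z_summable Y.hU.2.1 ht ht1).hasSum
  have h2 := (h.eventually (lt_mem_nhds (show Zfun U t - ε < Zfun U t by linarith))).exists
  obtain ⟨S, hS⟩ := h2
  obtain ⟨k, hk⟩ := Y.subset_D (S.map (Function.Embedding.subtype _)) (by
    intro p hp
    simp only [Finset.mem_map, Function.Embedding.subtype_apply] at hp
    obtain ⟨q, _, rfl⟩ := hp
    exact q.2)
  refine ⟨k, ?_⟩
  have := Zs_subset hk t
  have e : Zs (S.map (Function.Embedding.subtype _)) t =
      ∑ p ∈ S, (2 : ℝ) ^ (-((p : List Bool).length : ℝ) / t) := by simp [Zs]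
  rw [e] at this
  linarith

/-- A positive lower bound of all `Z_k(t)`, `t ≥ T`. -/
noncomputable def z0 : ℝ := (2 : ℝ) ^ (-(Y.x1.length : ℝ) / T)

theorem z0_pos : 0 < Y.z0 := by unfold z0; positivity

theorem z0_le (k : ℕ) {t : ℝ} (ht : T ≤ t) : Y.z0 ≤ Zs (Y.D k) t :=
  (term_le_Zs (Y.mem1 k) T).trans (Zs_mono Y.hT0 ht)

theorem Zk_pos (k : ℕ) (t : ℝ) : 0 < Zs (Y.D k) t :=
  lt_of_lt_of_le (by positivity) (term_le_Zs (Y.mem1 k) t)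

theorem Z_pos (Y : Sys U T) : 0 < Zfun U T := (Y.Zk_pos 0 T).trans_le (Y.Zk_le 0 Y.hT0 Y.hT1.le)

theorem F_eq : Ffun U T * Real.log 2 = -(T * Real.log (Zfun U T)) := by
  have : Real.log 2 ≠ 0 := (Real.log_pos (by norm_num)).ne'
  unfold Ffun Real.logb
  field_simp

/-- The decidable test, as a function of list, `n`, `a`, `u`, `v`. -/
def ppTest (q : List (List Bool × List Bool) × ℕ × ℕ × ℕ × ℕ) : Bool :=
  decide (0 < q.2.2.1 ∧ 2 ^ ((q.2.1 + q.1.length) * q.2.2.1 * q.2.2.2.2) <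
    NN q.1 q.2.2.1 q.2.1 (q.2.1 + q.1.length) ^ (q.2.2.1 * q.2.2.2.2) *
      2 ^ (q.2.2.2.1 * 2 ^ q.2.1))

theorem ppTest_primrec : Primrec ppTest := by
  have hL : Primrec (fun q : List (List Bool × List Bool) × ℕ × ℕ × ℕ × ℕ => q.1) := Primrec.fst
  have hn : Primrec (fun q : List (List Bool × List Bool) × ℕ × ℕ × ℕ × ℕ => q.2.1) :=
    Primrec.fst.comp Primrec.snd
  have ha : Primrec (fun q : List (List Bool × List Bool) × ℕ × ℕ × ℕ × ℕ => q.2.2.1) :=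
    Primrec.fst.comp (Primrec.snd.comp Primrec.snd)
  have hu : Primrec (fun q : List (List Bool × List Bool) × ℕ × ℕ × ℕ × ℕ => q.2.2.2.1) :=
    Primrec.fst.comp (Primrec.snd.comp (Primrec.snd.comp Primrec.snd))
  have hv : Primrec (fun q : List (List Bool × List Bool) × ℕ × ℕ × ℕ × ℕ => q.2.2.2.2) :=
    Primrec.snd.comp (Primrec.snd.comp (Primrec.snd.comp Primrec.snd))
  have hm : Primrec (fun q : List (List Bool × List Bool) × ℕ × ℕ × ℕ × ℕ => q.2.1 + q.1.length) :=
    Primrec.nat_add.comp hn (Primrec.list_length.comp hL)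
  have hN : Primrec (fun q : List (List Bool × List Bool) × ℕ × ℕ × ℕ × ℕ =>
      NN q.1 q.2.2.1 q.2.1 (q.2.1 + q.1.length)) :=
    NN_primrec.comp (Primrec.pair hL (Primrec.pair ha (Primrec.pair hn hm)))
  have h1 : PrimrecPred (fun q : List (List Bool × List Bool) × ℕ × ℕ × ℕ × ℕ => 0 < q.2.2.1) :=
    Primrec.nat_lt.comp (Primrec.const 0) ha
  have hA : Primrec (fun q : List (List Bool × List Bool) × ℕ × ℕ × ℕ × ℕ =>
      2 ^ ((q.2.1 + q.1.length) * q.2.2.1 * q.2.2.2.2)) :=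
    primrec_two_pow.comp (Primrec.nat_mul.comp (Primrec.nat_mul.comp hm ha) hv)
  have hB : Primrec (fun q : List (List Bool × List Bool) × ℕ × ℕ × ℕ × ℕ =>
      NN q.1 q.2.2.1 q.2.1 (q.2.1 + q.1.length) ^ (q.2.2.1 * q.2.2.2.2) *
        2 ^ (q.2.2.2.1 * 2 ^ q.2.1)) :=
    Primrec.nat_mul.comp (primrec_pow.comp hN (Primrec.nat_mul.comp ha hv))
      (primrec_two_pow.comp (Primrec.nat_mul.comp hu (primrec_two_pow.comp hn)))
  exact (h1.and (Primrec.nat_lt.comp hA hB)).decide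

/-- The decidable test. -/
def PP (n a k : ℕ) : Bool := ppTest (Y.E k, n, a, Y.u n, Y.v n)

theorem PP_computable : Computable (fun q : ℕ × ℕ × ℕ => Y.PP q.1 q.2.1 q.2.2) := by
  have c1 : Computable (fun q : ℕ × ℕ × ℕ => q.1) := Computable.fst
  have c2 : Computable (fun q : ℕ × ℕ × ℕ => q.2.1) := Computable.fst.comp Computable.snd
  have c3 : Computable (fun q : ℕ × ℕ × ℕ => q.2.2) := Computable.snd.comp Computable.snd
  exact ppTest_primrec.to_comp.comp
    ((Y.hE.comp c3).pair (c1.pair (c2.pair ((Y.hu.comp c1).pair (Y.hv.comp c1)))))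

theorem PP_sound {n a k : ℕ} (h : Y.PP n a k = true) :
    0 < a ∧ T * Real.log (Zfun U T) <
      ((a : ℝ) / 2 ^ n) * Real.log (Zs (Y.D k) ((a : ℝ) / 2 ^ n)) := by
  simp only [PP, ppTest, decide_eq_true_eq] at h
  obtain ⟨ha, h⟩ := h
  refine ⟨ha, ?_⟩
  set m := n + (Y.E k).length
  set N := NN (Y.E k) a n m with hN
  obtain ⟨hv, hu1, hu2⟩ := Y.huv n
  have ha' : (0 : ℝ) < a := by exact_mod_cast ha
  have hv' : (0 : ℝ) < Y.v n := by exact_mod_cast hv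
  have hN0 : 0 < N := by
    rcases Nat.eq_zero_or_pos N with h0 | h0
    · rw [h0, zero_pow (Nat.mul_pos ha hv).ne'] at h
      simp at h
    · exact h0
  have hN0' : (0 : ℝ) < N := by exact_mod_cast hN0
  have hl2 : 0 < Real.log 2 := Real.log_pos (by norm_num)
  have h' : (2 : ℝ) ^ (m * a * Y.v n) < (N : ℝ) ^ (a * Y.v n) * 2 ^ (Y.u n * 2 ^ n) := by
    exact_mod_cast h
  have h3 := Real.log_lt_log (by positivity) h'
  rw [Real.log_mul (by positivity) (by positivity), Real.log_pow, Real.log_pow, Real.log_pow] at h3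
  push_cast at h3
  have hb : (N : ℝ) ≤ 2 ^ m * Zs (Y.D k) ((a : ℝ) / 2 ^ n) :=
    (NN_bounds (Y.E k) (Y.nodup k) a n m ha).1
  have h4 := Real.log_le_log hN0' hb
  rw [Real.log_mul (by positivity) (Y.Zk_pos k _).ne', Real.log_pow] at h4
  set lZ := Real.log (Zs (Y.D k) ((a : ℝ) / 2 ^ n))
  have h4' : Real.log N ≤ m * Real.log 2 + lZ := h4
  have hF := F_eq (U := U) (T := T)
  have h5 : (Y.u n : ℝ) / Y.v n * Real.log 2 ≤ Ffun U T * Real.log 2 :=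
    mul_le_mul_of_nonneg_right hu1 hl2.le
  have h6 : -((Y.u n : ℝ) / Y.v n * Real.log 2) < (a : ℝ) / 2 ^ n * lZ := by
    have e : (a : ℝ) / 2 ^ n * lZ + (Y.u n : ℝ) / Y.v n * Real.log 2 =
        ((a * Y.v n) * lZ + Y.u n * 2 ^ n * Real.log 2) / (2 ^ n * Y.v n) := by
      field_simp
    have : 0 < (a : ℝ) / 2 ^ n * lZ + (Y.u n : ℝ) / Y.v n * Real.log 2 := by
      rw [e]
      apply div_pos _ (by positivity)
      have := mul_le_mul_of_nonneg_left h4' (by positivity : (0 : ℝ) ≤ a * Y.v n)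
      nlinarith
    linarith
  linarith

theorem PP_gt {n a k : ℕ} (h : Y.PP n a k = true) : T < (a : ℝ) / 2 ^ n := by
  obtain ⟨ha, h⟩ := Y.PP_sound h
  by_contra hle
  push Not at hle
  have ha' : (0 : ℝ) < a := by exact_mod_cast ha
  set t := (a : ℝ) / 2 ^ n
  have ht : 0 < t := by positivity
  have e := entropy_growth (Y.kr k) (Y.mem1 k) (Y.mem2 k) Y.hne ht le_rfl hle Y.hT1.le
  have h1 : 0 ≤ T * Real.log (Zs (Y.D k) T) - t * Real.log (Zs (Y.D k) t) :=
    le_trans (mul_nonneg (by positivity) (by linarith)) e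
  have h2 := Real.log_le_log (Y.Zk_pos k T) (Y.Zk_le k Y.hT0 Y.hT1.le)
  have := mul_le_mul_of_nonneg_left h2 Y.hT0.le
  linarith

theorem log_sub_le {x y : ℝ} (hx : 0 < x) (hy : 0 < y) : Real.log y - Real.log x ≤ (y - x) / x := by
  rw [← Real.log_div hy.ne' hx.ne']
  have := Real.log_le_sub_one_of_pos (div_pos hy hx)
  rwa [sub_div, div_self hx.ne']

theorem PP_not {n a k : ℕ} (h : Y.PP n a k = false) (hn : 1 / 2 ^ n ≤ Y.z0 / 2) (ha : 0 < a)
    (ht : T ≤ (a : ℝ) / 2 ^ n) (ht1 : (a : ℝ) / 2 ^ n ≤ 1) :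
    ((a : ℝ) / 2 ^ n) * Real.log (Zs (Y.D k) ((a : ℝ) / 2 ^ n)) ≤
      T * Real.log (Zfun U T) + (2 + 2 / Y.z0) * (1 / 2 ^ n) := by
  simp only [PP, ppTest, decide_eq_false_iff_not, not_and, not_lt] at h
  replace h := h ha
  set m := n + (Y.E k).length with hm
  set N := NN (Y.E k) a n m with hN
  obtain ⟨hv, hu1, hu2⟩ := Y.huv n
  have ha' : (0 : ℝ) < a := by exact_mod_cast ha
  have hv' : (0 : ℝ) < Y.v n := by exact_mod_cast hv
  have hz0 := Y.z0_pos
  have hzz := Y.z0_le k ht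
  set t := (a : ℝ) / 2 ^ n with htt
  set Z := Zs (Y.D k) t with hZ
  have hb : (2 : ℝ) ^ m * Z ≤ N + (Y.E k).length := (NN_bounds (Y.E k) (Y.nodup k) a n m ha).2
  set q : ℝ := 1 / 2 ^ n with hq
  have hq0 : 0 < q := by positivity
  have hlen : ((Y.E k).length : ℝ) ≤ 2 ^ m * q := by
    have : ((Y.E k).length : ℝ) ≤ 2 ^ (Y.E k).length := by exact_mod_cast Nat.lt_two_pow_self.le
    rw [hm, pow_add, hq]; field_simp; exact this
  have hNq : Z - q ≤ N / 2 ^ m := by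
    rw [le_div_iff₀ (by positivity)]; linarith
  set y : ℝ := (N : ℝ) / 2 ^ m with hy
  have hy0 : Y.z0 / 2 ≤ y := by linarith
  have hypos : 0 < y := by linarith
  have hN0' : (0 : ℝ) < N := by
    have : (N : ℝ) = y * 2 ^ m := by rw [hy]; field_simp
    rw [this]; positivity
  have hl2 : 0 < Real.log 2 := Real.log_pos (by norm_num)
  have hl21 : Real.log 2 ≤ 1 := by have := Real.log_le_sub_one_of_pos (show (0:ℝ) < 2 by norm_num); linarith
  have h' : (N : ℝ) ^ (a * Y.v n) * 2 ^ (Y.u n * 2 ^ n) ≤ (2 : ℝ) ^ (m * a * Y.v n) := by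
    exact_mod_cast h
  have h3 := Real.log_le_log (by positivity) h'
  rw [Real.log_mul (by positivity) (by positivity), Real.log_pow, Real.log_pow, Real.log_pow] at h3
  push_cast at h3
  have hly : Real.log y = Real.log N - m * Real.log 2 := by
    rw [hy, Real.log_div hN0'.ne' (by positivity), Real.log_pow]
  have hF := F_eq (U := U) (T := T)
  have h5 : Ffun U T * Real.log 2 ≤ ((Y.u n : ℝ) / Y.v n + 2 / 2 ^ n) * Real.log 2 :=
    mul_le_mul_of_nonneg_right hu2 hl2.le
  have h6 : t * Real.log y ≤ -((Y.u n : ℝ) / Y.v n * Real.log 2) := by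
    have e : t * Real.log y + (Y.u n : ℝ) / Y.v n * Real.log 2 =
        ((a * Y.v n) * Real.log N + Y.u n * 2 ^ n * Real.log 2 - m * a * Y.v n * Real.log 2) / (2 ^ n * Y.v n) := by
      rw [hly, htt]; field_simp; ring
    have : t * Real.log y + (Y.u n : ℝ) / Y.v n * Real.log 2 ≤ 0 := by
      rw [e]
      apply div_nonpos_of_nonpos_of_nonneg _ (by positivity)
      linarith
    linarith
  have h7 : Real.log Z - Real.log y ≤ 2 / Y.z0 * q := by
    refine (log_sub_le hypos (Y.Zk_pos k t)).trans ?_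
    rw [div_le_iff₀ hypos]
    have : 2 / Y.z0 * q * (Y.z0 / 2) ≤ 2 / Y.z0 * q * y := by gcongr
    have e : 2 / Y.z0 * q * (Y.z0 / 2) = q := by field_simp
    rw [e] at this
    linarith
  have h8 : t * (Real.log Z - Real.log y) ≤ 1 * (2 / Y.z0 * q) := by
    have ht0 : 0 ≤ t := by positivity
    have hpos : 0 ≤ 2 / Y.z0 * q := by positivity
    calc _ ≤ t * (2 / Y.z0 * q) := mul_le_mul_of_nonneg_left h7 ht0
      _ ≤ _ := mul_le_mul_of_nonneg_right ht1 hpos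
  have h9 : 2 / 2 ^ n * Real.log 2 ≤ 2 * q := by
    have : (2 : ℝ) / 2 ^ n = 2 * q := by rw [hq]; ring
    rw [this]; nlinarith
  linarith

/-- Shared lemma: for a good stage the test succeeds shortly above `T`. -/
theorem PP_succeeds : ∃ Δ : ℕ, ∀ n a k : ℕ, 1 / 2 ^ n ≤ Y.z0 / 2 → 0 < a →
    T * 2 ^ n + Δ ≤ a → (a : ℝ) ≤ 2 ^ n → Zfun U T - Zs (Y.D k) T ≤ 2 * (1 / 2 ^ n) →
    Y.PP n a k = true := by
  have hz0 := Y.z0_pos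
  set c := (2 : ℝ) ^ (-(Y.x1.length : ℝ) / T) * 2 ^ (-(Y.x2.length : ℝ) / T) / 2 with hc
  have hc0 : 0 < c := by positivity
  obtain ⟨Δ, hΔ⟩ := exists_nat_gt ((2 + 4 / Y.z0) / c)
  refine ⟨Δ, fun n a k hn ha hTa ha1 hZ => ?_⟩
  by_contra hP
  rw [Bool.not_eq_true] at hP
  have hΔ0 : (0 : ℝ) ≤ Δ := by positivity
  have ht : T ≤ (a : ℝ) / 2 ^ n := by rw [le_div_iff₀ (by positivity)]; linarith
  have ht1 : (a : ℝ) / 2 ^ n ≤ 1 := by rw [div_le_one (by positivity)]; exact ha1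
  have h1 := Y.PP_not hP hn ha ht ht1
  have h2 := entropy_growth (Y.kr k) (Y.mem1 k) (Y.mem2 k) Y.hne Y.hT0 le_rfl ht ht1
  rw [← hc] at h2
  set q : ℝ := 1 / 2 ^ n with hq
  have hq0 : 0 < q := by positivity
  have h3 : Δ * q ≤ (a : ℝ) / 2 ^ n - T := by
    rw [hq, le_sub_iff_add_le, le_div_iff₀ (by positivity)]
    field_simp; linarith
  have h4 : (2 + 4 / Y.z0) * q < c * Δ * q := by
    rw [div_lt_iff₀ hc0] at hΔ
    rw [mul_comm c]
    exact mul_lt_mul_of_pos_right hΔ hq0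
  have h5 : c * (Δ * q) ≤ c * ((a : ℝ) / 2 ^ n - T) := mul_le_mul_of_nonneg_left h3 hc0.le
  have h6 : Real.log (Zfun U T) - Real.log (Zs (Y.D k) T) ≤ 2 / Y.z0 * q := by
    refine (log_sub_le (Y.Zk_pos k T) Y.Z_pos).trans ?_
    rw [div_le_iff₀ (Y.Zk_pos k T)]
    have : 2 / Y.z0 * q * Y.z0 ≤ 2 / Y.z0 * q * Zs (Y.D k) T := by
      have := Y.z0_le k le_rfl
      gcongr
    have e : 2 / Y.z0 * q * Y.z0 = 2 * q := by field_simp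
    rw [e] at this
    linarith
  have h7 : T * (Real.log (Zfun U T) - Real.log (Zs (Y.D k) T)) ≤ 1 * (2 / Y.z0 * q) := by
    have hpos : 0 ≤ 2 / Y.z0 * q := by positivity
    calc _ ≤ T * (2 / Y.z0 * q) := mul_le_mul_of_nonneg_left h6 Y.hT0.le
      _ ≤ _ := mul_le_mul_of_nonneg_right Y.hT1.le hpos
  have e : (2 + 4 / Y.z0) * q = (2 + 2 / Y.z0) * q + 2 / Y.z0 * q := by ring
  linarith

end Sys


/-- Integer part of `T * 2 ^ n`. -/
noncomputable def Kn (T : ℝ) (n : ℕ) : ℕ := ⌊T * 2 ^ n⌋₊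

theorem Kn_div (T : ℝ) (n j : ℕ) : Kn T (n + j) / 2 ^ j = Kn T n := by
  unfold Kn
  have := Nat.floor_div_natCast (T * 2 ^ (n + j)) (2 ^ j)
  rw [← this]
  congr 1
  push_cast
  rw [pow_add]; field_simp

theorem bitOf_eq {T : ℝ} (h0 : 0 < T) (h1 : T < 1) (i : ℕ) :
    bitOf T i = decide (Kn T (i + 1) % 2 = 1) := by
  unfold bitOf Kn
  rw [Int.fract_eq_self.2 ⟨h0.le, h1⟩, ← Int.natCast_floor_eq_floor (by positivity)]
  congr 1
  rw [eq_iff_iff]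
  omega

theorem bitVal_firstBits {T : ℝ} (h0 : 0 < T) (h1 : T < 1) (n : ℕ) :
    bitVal (firstBits T n).reverse = Kn T n := by
  induction n with
  | zero =>
    have : ⌊T⌋₊ = 0 := Nat.floor_eq_zero.2 h1
    simp [firstBits, bitVal, Kn, this]
  | succ n ih =>
    have e : firstBits T (n + 1) = firstBits T n ++ [bitOf T n] := by
      simp [firstBits, List.range_succ]
    rw [e, List.reverse_append]
    have e2 : bitVal ([bitOf T n].reverse ++ (firstBits T n).reverse) =
      2 * bitVal (firstBits T n).reverse + cond (bitOf T n) 1 0 := rfl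
    rw [e2, ih, bitOf_eq h0 h1, ← Kn_div T n 1]
    by_cases h : Kn T (n + 1) % 2 = 1
    · simp [h]; omega
    · simp [h]; omega

/-- The `n` lowest binary digits of `x`, most significant first. -/
def bitsMSB (n x : ℕ) : List Bool := (List.range n).map fun i => decide (x / 2 ^ (n - 1 - i) % 2 = 1)

theorem firstBits_eq {T : ℝ} (h0 : 0 < T) (h1 : T < 1) (n : ℕ) :
    firstBits T n = bitsMSB n (Kn T n) := by
  unfold firstBits bitsMSB
  refine List.map_congr_left fun i hi => ?_
  rw [List.mem_range] at hi
  rw [bitOf_eq h0 h1]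
  have := Kn_div T (i + 1) (n - 1 - i)
  rw [show i + 1 + (n - 1 - i) = n by omega] at this
  rw [this]

theorem bitsMSB_primrec : Primrec₂ bitsMSB := by
  unfold bitsMSB
  refine Primrec.list_map (f := fun q : ℕ × ℕ => List.range q.1)
    (g := fun (q : ℕ × ℕ) i => decide (q.2 / 2 ^ (q.1 - 1 - i) % 2 = 1)) ?_ ?_
  · exact Primrec.list_range.comp Primrec.fst
  · have hx : Primrec (fun z : (ℕ × ℕ) × ℕ => z.1.2) := Primrec.snd.comp Primrec.fst
    have hn : Primrec (fun z : (ℕ × ℕ) × ℕ => z.1.1) := Primrec.fst.comp Primrec.fst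
    have he : Primrec (fun z : (ℕ × ℕ) × ℕ => z.1.2 / 2 ^ (z.1.1 - 1 - z.2) % 2) :=
      Primrec.nat_mod.comp (Primrec.nat_div.comp hx (primrec_two_pow.comp
        (Primrec.nat_sub.comp (Primrec.nat_sub.comp hn (Primrec.const 1)) Primrec.snd)))
        (Primrec.const 2)
    exact (PrimrecRel.comp (Primrec.eq (α := ℕ)) he (Primrec.const 1)).decide

theorem exists_two_pow_small {ε : ℝ} (hε : 0 < ε) : ∃ n0 : ℕ, ∀ n ≥ n0, 1 / (2 : ℝ) ^ n ≤ ε := by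
  obtain ⟨n0, h⟩ := exists_pow_lt_of_lt_one hε (show (1 / 2 : ℝ) < 1 by norm_num)
  refine ⟨n0, fun n hn => ?_⟩
  have : (1 / 2 : ℝ) ^ n ≤ (1 / 2) ^ n0 := pow_le_pow_of_le_one (by norm_num) (by norm_num) hn
  rw [one_div_pow] at this
  linarith

theorem Kn_le {T : ℝ} (h0 : 0 < T) (n : ℕ) : (Kn T n : ℝ) ≤ T * 2 ^ n :=
  Nat.floor_le (by positivity)

theorem lt_Kn {T : ℝ} (n : ℕ) : T * 2 ^ n < Kn T n + 1 := Nat.lt_floor_add_one _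

/-- Unbounded search for a computable test. -/
def search (b : ℕ → Bool) : Part ℕ := Nat.rfind (fun k => Part.some (b k) : ℕ →. Bool)

theorem search_partrec {α : Type} [Primcodable α] {b : α → ℕ → Bool} (hb : Computable₂ b) :
    Partrec (fun x => search (b x)) :=
  Partrec.rfind (p := fun x k => (Part.some (b x k) : Part Bool)) hb.partrec

theorem search_spec {b : ℕ → Bool} {k : ℕ} (h : k ∈ search b) : b k = true :=
  (Part.mem_some_iff.1 (Nat.mem_rfind.1 h).1).symm

theorem search_min {b : ℕ → Bool} {k j : ℕ} (h : k ∈ search b) (hj : b j = true) : k ≤ j := by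
  by_contra hlt
  push Not at hlt
  have := Part.mem_some_iff.1 ((Nat.mem_rfind.1 h).2 hlt)
  rw [hj] at this
  exact absurd this (by simp)

theorem search_exists {b : ℕ → Bool} {j : ℕ} (hj : b j = true) : ∃ k, k ∈ search b := by
  apply Part.dom_iff_mem.1
  refine Nat.rfind_dom'.2 ⟨j, ?_, fun _ => trivial⟩
  rw [hj]; exact Part.mem_some _

namespace Sys

variable {U : List Bool →. List Bool} {T : ℝ} (Y : Sys U T)

theorem stage_good (Δ : ℕ) : ∃ n0 C : ℕ, 0 < C ∧ ∀ n ≥ n0, ∀ k, Y.PP n (Kn T n + 1 + Δ) k = true →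
    Zfun U T - Zs (Y.D k) T ≤ C / 2 ^ n := by
  have hT0 := Y.hT0
  have hT1 := Y.hT1
  obtain ⟨n0, hn0⟩ := exists_two_pow_small (show 0 < (1 - T) / 2 / (Δ + 1) by
    have : 0 < 1 - T := by linarith
    positivity)
  set t1 := (1 + T) / 2 with ht1
  set Lc : ℝ := 1 / ((1 / t1 - 1) * T ^ 2) with hLc
  have hLc0 : 0 < Lc := by
    have : 0 < 1 / t1 - 1 := by
      rw [sub_pos, lt_div_iff₀ (by linarith)]; linarith
    positivity
  obtain ⟨C, hC⟩ := exists_nat_gt (Lc * (Δ + 1))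
  have hC0 : (0 : ℝ) < C := lt_of_le_of_lt (by positivity) hC
  refine ⟨n0, C, by exact_mod_cast hC0, fun n hn k hP => ?_⟩
  have hgt := Y.PP_gt hP
  obtain ⟨ha, hG⟩ := Y.PP_sound hP
  set t : ℝ := ((Kn T n + 1 + Δ : ℕ) : ℝ) / 2 ^ n with ht
  have hn1 := hn0 n hn
  have htT : t - T ≤ (Δ + 1) * (1 / 2 ^ n) := by
    have := Kn_le hT0 n
    rw [ht, sub_le_iff_le_add, div_le_iff₀ (by positivity)]
    push_cast
    field_simp
    linarith
  have htt1 : t ≤ t1 := by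
    rw [le_div_iff₀ (by positivity)] at hn1
    rw [ht1]; linarith
  have hl := Zs_lipschitz (Y.kr k) hT0 hgt.le htt1 (by rw [ht1]; linarith)
  rw [← hLc] at hl
  have hZt0 := Y.Zk_pos k t
  have hZ1 : Zs (Y.D k) t ≤ 1 := Zs_le_one (Y.kr k) (hT0.trans hgt) (by rw [ht1] at htt1; linarith)
  have hlog : Real.log (Zs (Y.D k) t) ≤ 0 := Real.log_nonpos hZt0.le hZ1
  have h1 : t * Real.log (Zs (Y.D k) t) ≤ T * Real.log (Zs (Y.D k) t) := by nlinarith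
  have h2 : Real.log (Zfun U T) < Real.log (Zs (Y.D k) t) :=
    lt_of_mul_lt_mul_left (lt_of_lt_of_le hG h1) hT0.le
  have h3 := (Real.log_lt_log_iff Y.Z_pos hZt0).1 h2
  calc Zfun U T - Zs (Y.D k) T ≤ Lc * (t - T) := by linarith
    _ ≤ Lc * ((Δ + 1) * (1 / 2 ^ n)) := mul_le_mul_of_nonneg_left htT hLc0.le
    _ = Lc * (Δ + 1) * (1 / 2 ^ n) := by ring
    _ ≤ C * (1 / 2 ^ n) := by gcongr
    _ = _ := by ring

/-- A string differing from all outputs listed. -/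
def newStr (L : List (List Bool × List Bool)) : List Bool := true :: (L.map Prod.snd).flatten

theorem newStr_primrec : Primrec newStr := by
  refine Primrec.list_cons.comp (Primrec.const true) (Primrec.list_flatten.comp ?_)
  exact Primrec.list_map Primrec.id (Primrec.snd.comp Primrec.snd)

/-- The test of part A. -/
def testA (Δ : ℕ) (s : List Bool) (k : ℕ) : Bool := Y.PP s.length (bitVal s.reverse + 1 + Δ) k

theorem testA_computable (Δ : ℕ) : Computable₂ (Y.testA Δ) := by
  have h1 : Computable (fun z : List Bool × ℕ => z.1.length) :=
    (Primrec.list_length.comp Primrec.fst).to_comp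
  have h0 : Primrec (fun s : List Bool => bitVal s.reverse) :=
    bitVal_primrec.comp Primrec.list_reverse
  have h2 : Primrec (fun s : List Bool => bitVal s.reverse + 1 + Δ) :=
    Primrec.nat_add.comp (Primrec.succ.comp h0) (Primrec.const Δ)
  have h3 : Computable (fun z : List Bool × ℕ => bitVal z.1.reverse + 1 + Δ) :=
    h2.to_comp.comp Computable.fst
  have h4 : Computable (fun z : List Bool × ℕ => (z.1.length, bitVal z.1.reverse + 1 + Δ, z.2)) :=
    h1.pair (h3.pair Computable.snd)
  exact Y.PP_computable.comp h4

/-- The machine of part A: produce a string which is not output at the stage found. -/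
def phiA (Δ : ℕ) (s : List Bool) : Part (List Bool) :=
  (search (Y.testA Δ s)).map fun k => newStr (Y.E k)

theorem phiA_partrec (Δ : ℕ) : Partrec (Y.phiA Δ) := by
  have h2 : Computable₂ (fun (_ : List Bool) k => newStr (Y.E k)) :=
    newStr_primrec.to_comp.comp (Y.hE.comp Computable.snd)
  exact Partrec.map (search_partrec (Y.testA_computable Δ)) h2

theorem part_A (Y : Sys U T) : WeaklyChaitinTRandom U T T := by
  have hT0 := Y.hT0
  have hT1 := Y.hT1
  obtain ⟨Δ, hΔ⟩ := Y.PP_succeeds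
  obtain ⟨n0, C, hC, hn0⟩ := Y.stage_good Δ
  obtain ⟨n1, hn1⟩ := exists_two_pow_small (half_pos Y.z0_pos)
  obtain ⟨n2, hn2⟩ := exists_two_pow_small (show 0 < (1 - T) / (Δ + 1) by
    have : 0 < 1 - T := by linarith
    positivity)
  obtain ⟨d, hd⟩ := complexity_comp Y.hU (Y.phiA_partrec Δ)
  obtain ⟨c1, hc1⟩ := exists_nat_ge (T * Real.logb 2 C)
  refine ⟨n0 + n1 + n2 + d + c1, fun n' => ?_⟩
  obtain ⟨n, hn⟩ := n'
  simp only [PNat.mk_coe]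
  by_cases hbig : n0 + n1 + n2 ≤ n
  · have hq := hn1 n (by omega)
    have hq2 := hn2 n (by omega)
    set a := Kn T n + 1 + Δ with ha
    have hex : ∃ k, Y.PP n a k = true := by
      obtain ⟨k, hk⟩ := Y.Zk_tendsto hT0 hT1.le (show 0 < 2 * (1 / (2 : ℝ) ^ n) by positivity)
      refine ⟨k, hΔ n a k hq (by omega) ?_ ?_ hk.le⟩
      · have := lt_Kn (T := T) n
        rw [ha]; push_cast; linarith
      · have := Kn_le hT0 n
        rw [le_div_iff₀ (by positivity), one_div_mul_eq_div, div_le_iff₀ (by positivity)] at hq2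
        rw [ha]; push_cast; linarith
    set s := firstBits T n with hs
    have hslen : s.length = n := by simp [hs, firstBits]
    have htest : ∀ k, Y.testA Δ s k = Y.PP n a k := fun k => by
      rw [testA, hslen, hs, bitVal_firstBits hT0 hT1, ← ha]
    obtain ⟨k0, hk0⟩ := hex
    obtain ⟨k, hk⟩ := search_exists ((htest k0).trans hk0)
    have hPk : Y.PP n a k = true := (htest k).symm.trans (search_spec hk)
    set s' := newStr (Y.E k) with hs'
    have hmem : s' ∈ Y.phiA Δ s := Part.mem_map _ hk
    have hcomp := hd s s' (exists_program Y.hU s) hmem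
    obtain ⟨p, hp, hplen⟩ := exists_min_program (exists_program Y.hU s')
    have hpD : p ∉ Y.D k := by
      intro hmem
      obtain ⟨s'', hs''⟩ := Y.mem_D.1 hmem
      have e : s'' = s' := Part.mem_unique (Y.sound _ _ _ hs'') hp
      have h1 : s'' ∈ (Y.E k).map Prod.snd := List.mem_map.2 ⟨_, hs'', rfl⟩
      have h2 := (List.sublist_flatten_of_mem h1).length_le
      rw [e, hs', newStr] at h2
      simp only [List.length_cons] at h2
      omega
    have h1 := Y.Zk_new k hpD (Part.dom_iff_mem.2 ⟨_, hp⟩)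
    have h2 := hn0 n (by omega) k hPk
    have h3 : (2 : ℝ) ^ (-(p.length : ℝ) / T) ≤ C / 2 ^ n := by linarith
    have hC' : (0 : ℝ) < C := by exact_mod_cast hC
    have h4 := Real.logb_le_logb_of_le (b := 2) (by norm_num) (by positivity) h3
    rw [Real.logb_rpow (by norm_num) (by norm_num), Real.logb_div hC'.ne' (by positivity),
      Real.logb_pow, Real.logb_self_eq_one (by norm_num), div_le_iff₀ hT0] at h4
    have h5 : (p.length : ℝ) ≤ complexity U s + d := by
      rw [hplen]; exact_mod_cast hcomp
    push_cast
    have : (0 : ℝ) ≤ (n0 : ℝ) + n1 + n2 := by positivity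
    nlinarith
  · have h1 : (n : ℝ) ≤ ((n0 + n1 + n2 + d + c1 : ℕ) : ℝ) := by
      exact_mod_cast (by omega : n ≤ n0 + n1 + n2 + d + c1)
    have h2 : T * n ≤ n := by nlinarith [show (0 : ℝ) ≤ n by positivity]
    have h3 : (0 : ℝ) ≤ complexity U (firstBits T n) := by positivity
    linarith

end Sys

open Filter

/-- Has the partition sum at `A / 2 ^ B` grown noticeably between two lists? -/
def jumpTest (A B : ℕ) (q : List (List Bool × List Bool) × List (List Bool × List Bool) × ℕ) : Bool :=
  decide (NN q.2.1 A B (q.2.2 + 2 + q.1.length) + 2 ^ (q.1.length + 2) ≤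
    NN q.1 A B (q.2.2 + 2 + q.1.length))

theorem jumpTest_primrec (A B : ℕ) : Primrec (jumpTest A B) := by
  have h1 : Primrec (fun q : List (List Bool × List Bool) × List (List Bool × List Bool) × ℕ => q.1) :=
    Primrec.fst
  have h2 : Primrec (fun q : List (List Bool × List Bool) × List (List Bool × List Bool) × ℕ => q.2.1) :=
    Primrec.fst.comp Primrec.snd
  have h3 : Primrec (fun q : List (List Bool × List Bool) × List (List Bool × List Bool) × ℕ =>
      q.1.length) := Primrec.list_length.comp h1
  have hn : Primrec (fun q : List (List Bool × List Bool) × List (List Bool × List Bool) × ℕ => q.2.2) :=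
    Primrec.snd.comp Primrec.snd
  have hm : Primrec (fun q : List (List Bool × List Bool) × List (List Bool × List Bool) × ℕ =>
      q.2.2 + 2 + q.1.length) :=
    Primrec.nat_add.comp (Primrec.nat_add.comp hn (Primrec.const 2)) h3
  have hN : Primrec (fun q : List (List Bool × List Bool) × List (List Bool × List Bool) × ℕ =>
      NN q.2.1 A B (q.2.2 + 2 + q.1.length)) :=
    NN_primrec.comp (Primrec.pair h2 (Primrec.pair (Primrec.const A) (Primrec.pair (Primrec.const B) hm)))
  have hN' : Primrec (fun q : List (List Bool × List Bool) × List (List Bool × List Bool) × ℕ =>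
      NN q.1 A B (q.2.2 + 2 + q.1.length)) :=
    NN_primrec.comp (Primrec.pair h1 (Primrec.pair (Primrec.const A) (Primrec.pair (Primrec.const B) hm)))
  have hp : Primrec (fun q : List (List Bool × List Bool) × List (List Bool × List Bool) × ℕ =>
      2 ^ (q.1.length + 2)) :=
    primrec_two_pow.comp (Primrec.nat_add.comp h3 (Primrec.const 2))
  exact (Primrec.nat_le.comp (Primrec.nat_add.comp hN hp) hN').decide

namespace Sys

variable {U : List Bool →. List Bool} {T : ℝ} (Y : Sys U T) (A B : ℕ)

/-- One step of the jump process; the state is (number of jumps, last jump). -/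
def step (n k : ℕ) (c : ℕ × ℕ) : ℕ × ℕ :=
  bif jumpTest A B (Y.E (k + 1), Y.E c.2, n) then (c.1 + 1, k + 1) else c

/-- The jump process. -/
def st (n : ℕ) : ℕ → ℕ × ℕ
  | 0 => (0, 0)
  | k + 1 => Y.step A B n k (st n k)

theorem step_computable : Computable (fun q : ℕ × ℕ × ℕ × ℕ => Y.step A B q.1 q.2.1 q.2.2) := by
  have hn : Computable (fun q : ℕ × ℕ × ℕ × ℕ => q.1) := Computable.fst
  have hk : Computable (fun q : ℕ × ℕ × ℕ × ℕ => q.2.1 + 1) :=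
    Computable.succ.comp (Computable.fst.comp Computable.snd)
  have hc : Computable (fun q : ℕ × ℕ × ℕ × ℕ => q.2.2) := Computable.snd.comp Computable.snd
  have hc1 : Computable (fun q : ℕ × ℕ × ℕ × ℕ => q.2.2.1 + 1) :=
    Computable.succ.comp (Computable.fst.comp hc)
  have hc2 : Computable (fun q : ℕ × ℕ × ℕ × ℕ => q.2.2.2) := Computable.snd.comp hc
  have ht : Computable (fun q : ℕ × ℕ × ℕ × ℕ => jumpTest A B (Y.E (q.2.1 + 1), Y.E q.2.2.2, q.1)) :=
    (jumpTest_primrec A B).to_comp.comp ((Y.hE.comp hk).pair ((Y.hE.comp hc2).pair hn))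
  exact Computable.cond ht (hc1.pair hk) hc

theorem st_computable : Computable (fun q : ℕ × ℕ => Y.st A B q.1 q.2) := by
  have a1 : Computable (fun z : (ℕ × ℕ) × ℕ × ℕ × ℕ => z.1.1) := Computable.fst.comp Computable.fst
  have a2 : Computable (fun z : (ℕ × ℕ) × ℕ × ℕ × ℕ => (z.1.1, z.2)) := a1.pair Computable.snd
  have h1 : Computable₂ (fun (q : ℕ × ℕ) (z : ℕ × ℕ × ℕ) => Y.step A B q.1 z.1 z.2) :=
    Computable.comp (f := fun q : ℕ × ℕ × ℕ × ℕ => Y.step A B q.1 q.2.1 q.2.2)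
      (g := fun z : (ℕ × ℕ) × ℕ × ℕ × ℕ => (z.1.1, z.2)) (Y.step_computable A B) a2
  have h2 : Computable (fun q : ℕ × ℕ => (Nat.rec ((0, 0) : ℕ × ℕ)
      (fun y IH => Y.step A B q.1 y IH) q.2 : ℕ × ℕ)) :=
    Computable.nat_rec (f := fun q : ℕ × ℕ => q.2) (g := fun _ => ((0, 0) : ℕ × ℕ))
      (h := fun (q : ℕ × ℕ) (z : ℕ × ℕ × ℕ) => Y.step A B q.1 z.1 z.2)
      Computable.snd (Computable.const _) h1
  refine h2.of_eq fun q => ?_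
  obtain ⟨n, k⟩ := q
  induction k with
  | zero => rfl
  | succ k ih => simp only [st]; simp only at ih; rw [← ih]

theorem len_mono {k k' : ℕ} (h : k ≤ k') : (Y.E k).length ≤ (Y.E k').length :=
  ((List.Nodup.of_map _ (Y.nodup k)).subperm (Y.mono k k' h)).length_le

theorem jump_true {n l k : ℕ} (hA : 0 < A) (hlk : l ≤ k)
    (h : jumpTest A B (Y.E k, Y.E l, n) = true) :
    1 / 2 ^ (n + 1) ≤ Zs (Y.D k) ((A : ℝ) / 2 ^ B) - Zs (Y.D l) ((A : ℝ) / 2 ^ B) := by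
  simp only [jumpTest, decide_eq_true_eq] at h
  set m := n + 2 + (Y.E k).length with hm
  have h1 : (NN (Y.E k) A B m : ℝ) ≤ 2 ^ m * Zs (Y.D k) ((A : ℝ) / 2 ^ B) :=
    (NN_bounds (Y.E k) (Y.nodup k) A B m hA).1
  have h2 : (2 : ℝ) ^ m * Zs (Y.D l) ((A : ℝ) / 2 ^ B) ≤ NN (Y.E l) A B m + (Y.E l).length :=
    (NN_bounds (Y.E l) (Y.nodup l) A B m hA).2
  have h3 : ((Y.E l).length : ℝ) ≤ (Y.E k).length := by exact_mod_cast Y.len_mono hlk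
  have h4 : ((Y.E k).length : ℝ) ≤ 2 ^ (Y.E k).length := by exact_mod_cast Nat.lt_two_pow_self.le
  have h5 : (NN (Y.E l) A B m : ℝ) + 2 ^ ((Y.E k).length + 2) ≤ NN (Y.E k) A B m := by exact_mod_cast h
  set x := Zs (Y.D k) ((A : ℝ) / 2 ^ B)
  set y := Zs (Y.D l) ((A : ℝ) / 2 ^ B)
  have e : (2 : ℝ) ^ m = 2 ^ (n + 1) * (2 * 2 ^ (Y.E k).length) := by rw [hm]; ring
  rw [div_le_iff₀ (by positivity)]
  have hpos : (0 : ℝ) < 2 * 2 ^ (Y.E k).length := by positivity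
  have e2 : (2 : ℝ) ^ ((Y.E k).length + 2) = 4 * 2 ^ (Y.E k).length := by ring
  have : 1 * (2 * 2 ^ (Y.E k).length) ≤ (x - y) * 2 ^ (n + 1) * (2 * 2 ^ (Y.E k).length) := by
    have e3 : (x - y) * 2 ^ (n + 1) * (2 * 2 ^ (Y.E k).length) = 2 ^ m * x - 2 ^ m * y := by rw [e]; ring
    rw [e3]; linarith
  exact le_of_mul_le_mul_right this hpos

theorem jump_false {n l k : ℕ} (hA : 0 < A)
    (h : jumpTest A B (Y.E k, Y.E l, n) = false) :
    Zs (Y.D k) ((A : ℝ) / 2 ^ B) - Zs (Y.D l) ((A : ℝ) / 2 ^ B) ≤ 2 * (1 / 2 ^ n) := by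
  simp only [jumpTest, decide_eq_false_iff_not, not_le] at h
  set m := n + 2 + (Y.E k).length with hm
  have h1 : (NN (Y.E l) A B m : ℝ) ≤ 2 ^ m * Zs (Y.D l) ((A : ℝ) / 2 ^ B) :=
    (NN_bounds (Y.E l) (Y.nodup l) A B m hA).1
  have h2 : (2 : ℝ) ^ m * Zs (Y.D k) ((A : ℝ) / 2 ^ B) ≤ NN (Y.E k) A B m + (Y.E k).length :=
    (NN_bounds (Y.E k) (Y.nodup k) A B m hA).2
  have h4 : ((Y.E k).length : ℝ) ≤ 2 ^ (Y.E k).length := by exact_mod_cast Nat.lt_two_pow_self.le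
  have h5 : (NN (Y.E k) A B m : ℝ) < NN (Y.E l) A B m + 2 ^ ((Y.E k).length + 2) := by exact_mod_cast h
  set x := Zs (Y.D k) ((A : ℝ) / 2 ^ B)
  set y := Zs (Y.D l) ((A : ℝ) / 2 ^ B)
  have e : (2 : ℝ) ^ m = 2 ^ n * (4 * 2 ^ (Y.E k).length) := by rw [hm]; ring
  rw [mul_one_div, le_div_iff₀ (by positivity)]
  have hpos : (0 : ℝ) < 4 * 2 ^ (Y.E k).length := by positivity
  have e2 : (2 : ℝ) ^ ((Y.E k).length + 2) = 4 * 2 ^ (Y.E k).length := by ring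
  have : (x - y) * 2 ^ n * (4 * 2 ^ (Y.E k).length) ≤ 2 * (4 * 2 ^ (Y.E k).length) := by
    have e3 : (x - y) * 2 ^ n * (4 * 2 ^ (Y.E k).length) = 2 ^ m * x - 2 ^ m * y := by rw [e]; ring
    rw [e3]; linarith
  exact le_of_mul_le_mul_right this hpos

/-- Kraft mass at stage `k`. -/
noncomputable def mass (k : ℕ) : ℝ := ∑ p ∈ Y.D k, (2 : ℝ) ^ (-(p.length : ℝ))

theorem mass_jump {n l k : ℕ} (hA : 0 < A) (hA1 : (A : ℝ) / 2 ^ B ≤ 1) (hlk : l ≤ k)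
    (h : jumpTest A B (Y.E k, Y.E l, n) = true) :
    Y.mass l + (2 : ℝ) ^ (-((n + 1 : ℝ) * ((A : ℝ) / 2 ^ B))) ≤ Y.mass k := by
  have h1 := Y.jump_true A B hA hlk h
  have hA' : (0 : ℝ) < A := by exact_mod_cast hA
  set τ : ℝ := (A : ℝ) / 2 ^ B with hτ
  have hτ0 : 0 < τ := by positivity
  have hsub := Y.D_mono hlk
  have h2 := Zs_rpow_le (Y.D k \ Y.D l) hτ0 hA1
  have e1 : Zs (Y.D k) τ - Zs (Y.D l) τ = Zs (Y.D k \ Y.D l) τ := by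
    unfold Zs
    rw [← Finset.sum_sdiff hsub, add_sub_cancel_right]
  have e2 : Y.mass k = ∑ p ∈ Y.D k \ Y.D l, (2 : ℝ) ^ (-(p.length : ℝ)) + Y.mass l := by
    unfold mass
    rw [Finset.sum_sdiff hsub]
  rw [e1] at h1
  have h3 : ((1 : ℝ) / 2 ^ (n + 1)) ^ τ ≤ Zs (Y.D k \ Y.D l) τ ^ τ :=
    Real.rpow_le_rpow (by positivity) h1 hτ0.le
  have e3 : ((1 : ℝ) / 2 ^ (n + 1)) ^ τ = (2 : ℝ) ^ (-((n + 1 : ℝ) * τ)) := by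
    rw [one_div, Real.inv_rpow (by positivity), ← Real.rpow_natCast, ← Real.rpow_mul (by norm_num),
      Real.rpow_neg (by norm_num)]
    push_cast; rfl
  rw [e3] at h3
  linarith

theorem st_inv (hA : 0 < A) (hA1 : (A : ℝ) / 2 ^ B ≤ 1) (n k : ℕ) :
    (Y.st A B n k).2 ≤ k ∧
    Zs (Y.D k) ((A : ℝ) / 2 ^ B) - Zs (Y.D (Y.st A B n k).2) ((A : ℝ) / 2 ^ B) ≤ 2 * (1 / 2 ^ n) ∧
    ((Y.st A B n k).1 : ℝ) * (2 : ℝ) ^ (-((n + 1 : ℝ) * ((A : ℝ) / 2 ^ B))) ≤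
      Y.mass (Y.st A B n k).2 := by
  induction k with
  | zero =>
    refine ⟨le_rfl, ?_, ?_⟩
    · simp [st]
    · simp only [st, Nat.cast_zero, zero_mul]
      exact Finset.sum_nonneg fun _ _ => by positivity
  | succ k ih =>
    obtain ⟨h1, h2, h3⟩ := ih
    have e : Y.st A B n (k + 1) = Y.step A B n k (Y.st A B n k) := rfl
    rw [e, step]
    cases hj : jumpTest A B (Y.E (k + 1), Y.E (Y.st A B n k).2, n) with
    | true =>
      have := Y.mass_jump A B hA hA1 (by omega) hj
      refine ⟨by simp, by simp, ?_⟩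
      simp only [cond_true]
      push_cast
      linarith
    | false =>
      simp only [cond_false]
      exact ⟨by omega, Y.jump_false A B hA hj, h3⟩

theorem st_step (n k : ℕ) :
    Y.st A B n (k + 1) = Y.st A B n k ∨ (Y.st A B n k).1 < (Y.st A B n (k + 1)).1 := by
  have e : Y.st A B n (k + 1) = Y.step A B n k (Y.st A B n k) := rfl
  rw [e, step]
  cases hj : jumpTest A B (Y.E (k + 1), Y.E (Y.st A B n k).2, n) <;> simp

theorem st_mono (n k j : ℕ) :
    Y.st A B n (k + j) = Y.st A B n k ∨ (Y.st A B n k).1 < (Y.st A B n (k + j)).1 := by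
  induction j with
  | zero => left; rfl
  | succ j ih =>
    have := Y.st_step A B n (k + j)
    rw [← add_assoc]
    rcases ih with h | h <;> rcases this with h' | h'
    · left; rw [h', h]
    · right; rw [← h]; exact h'
    · right; rw [h']; exact h
    · right; omega

/-- Bound on the number of bits of the number of jumps. -/
def wB (n : ℕ) : ℕ := (n + 1) * A / 2 ^ B + 1

theorem wB_computable : Computable (wB A B) := by
  have h : Primrec (fun n : ℕ => (n + 1) * A / 2 ^ B) :=
    Primrec.nat_div.comp (Primrec.nat_mul.comp Primrec.succ (Primrec.const A)) (Primrec.const _)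
  exact (Primrec.succ.comp h).to_comp

theorem wB_le (n : ℕ) : (wB A B n : ℝ) ≤ (n + 1) * ((A : ℝ) / 2 ^ B) + 1 := by
  unfold wB
  have := Nat.cast_div_le (α := ℝ) (m := (n + 1) * A) (n := 2 ^ B)
  push_cast at this ⊢
  rw [mul_div_assoc] at this
  linarith

theorem lt_wB (n : ℕ) : (n + 1 : ℝ) * ((A : ℝ) / 2 ^ B) < wB A B n := by
  have h := Nat.lt_mul_div_succ ((n + 1) * A) (show 0 < 2 ^ B by positivity)
  have h' : ((n + 1 : ℝ) * A) < 2 ^ B * wB A B n := by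
    unfold wB
    exact_mod_cast h
  rw [← mul_div_assoc, div_lt_iff₀ (by positivity)]
  linarith

theorem st_lt (hA : 0 < A) (hA1 : (A : ℝ) / 2 ^ B ≤ 1) (n k : ℕ) :
    (Y.st A B n k).1 < 2 ^ wB A B n := by
  have h := (Y.st_inv A B hA hA1 n k).2.2
  have h1 : Y.mass (Y.st A B n k).2 ≤ 1 := Y.kr _
  set J := (Y.st A B n k).1
  set x : ℝ := (n + 1 : ℝ) * ((A : ℝ) / 2 ^ B) with hx
  have h2 : (J : ℝ) * (2 : ℝ) ^ (-x) ≤ 1 := h.trans h1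
  rw [Real.rpow_neg (by norm_num), ← div_eq_mul_inv, div_le_one (by positivity)] at h2
  have h3 : (2 : ℝ) ^ x < 2 ^ (wB A B n : ℝ) :=
    Real.rpow_lt_rpow_of_exponent_lt (by norm_num) (lt_wB A B n)
  rw [Real.rpow_natCast] at h3
  exact_mod_cast lt_of_le_of_lt h2 h3

theorem exists_last (hA : 0 < A) (hA1 : (A : ℝ) / 2 ^ B ≤ 1) (n : ℕ) :
    ∃ k1, ∀ k, (Y.st A B n k).1 ≤ (Y.st A B n k1).1 := by
  have hb : BddAbove (Set.range fun k => (Y.st A B n k).1) :=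
    ⟨2 ^ wB A B n, by rintro _ ⟨k, rfl⟩; exact (Y.st_lt A B hA hA1 n k).le⟩
  obtain ⟨k1, hk1⟩ := Nat.sSup_mem (Set.range_nonempty _) hb
  refine ⟨k1, fun k => ?_⟩
  simp only at hk1
  rw [hk1]
  exact le_csSup hb ⟨k, rfl⟩

theorem last_good (hA : 0 < A) (hA1 : (A : ℝ) / 2 ^ B ≤ 1) (hTA : T ≤ (A : ℝ) / 2 ^ B) (n k : ℕ)
    (hk : ∀ k', (Y.st A B n k').1 ≤ (Y.st A B n k).1) :
    Zfun U T - Zs (Y.D k) T ≤ 2 * (1 / 2 ^ n) := by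
  apply le_of_forall_pos_le_add
  intro ε hε
  obtain ⟨k2, hk2⟩ := Y.Zk_tendsto Y.hT0 Y.hT1.le hε
  have h1 := Zs_subset (Y.D_mono (Nat.le_add_left k2 k)) T
  have hst : Y.st A B n (k + k2) = Y.st A B n k := by
    rcases Y.st_mono A B n k k2 with h | h
    · exact h
    · exact absurd (hk (k + k2)) (by omega)
  have h2 := (Y.st_inv A B hA hA1 n (k + k2)).2.1
  rw [hst] at h2
  have h3 := Zs_subset (Y.D_mono (Y.st_inv A B hA hA1 n k).1) ((A : ℝ) / 2 ^ B)
  have h4 := Zs_diff_mono (Y.D_mono (Nat.le_add_right k k2)) Y.hT0 hTA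
  linarith

/-- Test for the stage in part B. -/
def testB (q : ℕ × ℕ) (k : ℕ) : Bool := decide (q.2 ≤ (Y.st A B q.1 k).1)

theorem testB_computable : Computable₂ (Y.testB A B) := by
  have h1 : Computable (fun z : (ℕ × ℕ) × ℕ => z.1.2) := Computable.snd.comp Computable.fst
  have a1 : Computable (fun z : (ℕ × ℕ) × ℕ => z.1.1) := Computable.fst.comp Computable.fst
  have a2 : Computable (fun z : (ℕ × ℕ) × ℕ => (z.1.1, z.2)) := a1.pair Computable.snd
  have a3 : Computable (fun z : (ℕ × ℕ) × ℕ => Y.st A B z.1.1 z.2) :=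
    Computable.comp (f := fun q : ℕ × ℕ => Y.st A B q.1 q.2)
      (g := fun z : (ℕ × ℕ) × ℕ => (z.1.1, z.2)) (Y.st_computable A B) a2
  have h2 : Computable (fun z : (ℕ × ℕ) × ℕ => (Y.st A B z.1.1 z.2).1) :=
    Computable.fst.comp a3
  have h3 : Primrec₂ (fun a b : ℕ => decide (a ≤ b)) := Primrec.nat_le.decide
  have h4 : Computable (fun z : (ℕ × ℕ) × ℕ => decide (z.1.2 ≤ (Y.st A B z.1.1 z.2).1)) :=
    h3.to_comp.comp h1 h2
  exact h4

/-- Test for the numerator in part B. -/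
def testB2 (q : ℕ × ℕ) (a : ℕ) : Bool := Y.PP q.1 a q.2

theorem testB2_computable : Computable₂ Y.testB2 := by
  have a1 : Computable (fun z : (ℕ × ℕ) × ℕ => z.1.1) := Computable.fst.comp Computable.fst
  have a2 : Computable (fun z : (ℕ × ℕ) × ℕ => z.1.2) := Computable.snd.comp Computable.fst
  have h : Computable (fun z : (ℕ × ℕ) × ℕ => (z.1.1, z.2, z.1.2)) :=
    a1.pair (Computable.snd.pair a2)
  have h4 : Computable (fun z : (ℕ × ℕ) × ℕ => Y.PP z.1.1 z.2 z.1.2) :=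
    Computable.comp (f := fun q : ℕ × ℕ × ℕ => Y.PP q.1 q.2.1 q.2.2)
      (g := fun z : (ℕ × ℕ) × ℕ => (z.1.1, z.2, z.1.2)) Y.PP_computable h
  exact h4

/-- The inner machine of part B. -/
def inner (δ : ℕ) (q : ℕ × ℕ) : Part (List Bool) :=
  (search (Y.testB2 q)).map fun a => bitsMSB q.1 (a - 1 - δ)

theorem inner_partrec (δ : ℕ) : Partrec (Y.inner δ) := by
  have h1 : Primrec₂ (fun (q : ℕ × ℕ) (a : ℕ) => bitsMSB q.1 (a - 1 - δ)) :=
    bitsMSB_primrec.comp (Primrec.fst.comp Primrec.fst)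
      (Primrec.nat_sub.comp (Primrec.nat_sub.comp Primrec.snd (Primrec.const 1)) (Primrec.const δ))
  exact Partrec.map (search_partrec Y.testB2_computable) h1.to_comp

/-- The machine of part B. -/
def phiB (δ : ℕ) (q : ℕ × ℕ) : Part (List Bool) :=
  (search (Y.testB A B q)).bind fun k => Y.inner δ (q.1, k)

theorem phiB_partrec (δ : ℕ) : Partrec (Y.phiB A B δ) := by
  have h1 : Computable (fun z : (ℕ × ℕ) × ℕ => (z.1.1, z.2)) :=
    (Computable.fst.comp Computable.fst).pair Computable.snd
  have h2 : Partrec₂ (fun (q : ℕ × ℕ) (k : ℕ) => Y.inner δ (q.1, k)) := (Y.inner_partrec δ).comp h1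
  exact Partrec.bind (search_partrec (Y.testB_computable A B)) h2

theorem compress (Y : Sys U T) (A B : ℕ) (hA : 0 < A) (hA1 : (A : ℝ) / 2 ^ B ≤ 1) (hTA : T ≤ (A : ℝ) / 2 ^ B) :
    ∃ n0 d : ℕ, ∀ n ≥ n0, ∀ j, n < 2 ^ j →
      complexity U (firstBits T n) ≤ 2 * j + 1 + wB A B n + d := by
  have hT0 := Y.hT0
  have hT1 := Y.hT1
  obtain ⟨Δ, hΔ⟩ := Y.PP_succeeds
  obtain ⟨n1, hn1⟩ := exists_two_pow_small (half_pos Y.z0_pos)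
  obtain ⟨n2, hn2⟩ := exists_two_pow_small (show 0 < (1 - T) / (Δ + 1) by
    have : 0 < 1 - T := by linarith
    positivity)
  choose d hd using fun δ => coding Y.hU (wB_computable A B) (Y.phiB_partrec A B δ)
  refine ⟨n1 + n2, (Finset.range (Δ + 1)).sup d, fun n hn j hj => ?_⟩
  have hq := hn1 n (by omega)
  have hq2 := hn2 n (by omega)
  obtain ⟨k1, hk1⟩ := Y.exists_last A B hA hA1 n
  set J := (Y.st A B n k1).1 with hJ
  have hJlt : J < 2 ^ wB A B n := Y.st_lt A B hA hA1 n k1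
  obtain ⟨k, hk⟩ := search_exists (b := Y.testB A B (n, J)) (j := k1) (by simp [testB, hJ])
  have hkJ : J ≤ (Y.st A B n k).1 := by
    have := search_spec hk
    simpa [testB] using this
  have hgood := Y.last_good A B hA hA1 hTA n k (fun k' => (hk1 k').trans hkJ)
  have hP : Y.testB2 (n, k) (Kn T n + 1 + Δ) = true := by
    refine hΔ n (Kn T n + 1 + Δ) k hq (by omega) ?_ ?_ hgood
    · have := lt_Kn (T := T) n
      push_cast; linarith
    · have := Kn_le hT0 n
      rw [le_div_iff₀ (by positivity), one_div_mul_eq_div, div_le_iff₀ (by positivity)] at hq2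
      push_cast; linarith
  obtain ⟨a, ha⟩ := search_exists hP
  have ha1 := search_min ha hP
  have ha2 := Y.PP_gt (n := n) (a := a) (k := k) (search_spec (b := Y.testB2 (n, k)) ha)
  have ha3 : Kn T n < a := by
    rw [lt_div_iff₀ (by positivity)] at ha2
    have := (Kn_le hT0 n).trans_lt ha2
    exact_mod_cast this
  have hout : firstBits T n ∈ Y.phiB A B (a - 1 - Kn T n) (n, J) := by
    refine Part.mem_bind hk ?_
    rw [firstBits_eq hT0 hT1]
    have := Part.mem_map (fun x => bitsMSB n (x - 1 - (a - 1 - Kn T n))) ha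
    rw [show a - 1 - (a - 1 - Kn T n) = Kn T n by omega] at this
    exact this
  obtain ⟨p, hp, hpl⟩ := hd (a - 1 - Kn T n) n j J _ hj hJlt hout
  have hle := exists_program_le hp
  have hsup : d (a - 1 - Kn T n) ≤ (Finset.range (Δ + 1)).sup d :=
    Finset.le_sup (Finset.mem_range.2 (by omega))
  omega

theorem part_B (Y : Sys U T) : TCompressible U T T := by
  have hT0 := Y.hT0
  have hT1 := Y.hT1
  unfold TCompressible
  apply le_of_forall_pos_le_add
  intro ε hε
  obtain ⟨B, hB⟩ := exists_two_pow_small (lt_min (show 0 < ε / 3 by linarith) (sub_pos.2 hT1))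
  have hB1 := (hB B le_rfl).trans (min_le_left _ _)
  have hB2 := (hB B le_rfl).trans (min_le_right _ _)
  set A := Kn T B + 1 with hA
  have hAτ : (A : ℝ) / 2 ^ B ≤ T + 1 / 2 ^ B := by
    have := Kn_le hT0 B
    rw [div_le_iff₀ (by positivity), hA]
    push_cast
    rw [add_mul, one_div, inv_mul_cancel₀ (by positivity)]
    linarith
  have hTA : T ≤ (A : ℝ) / 2 ^ B := by
    have := lt_Kn (T := T) B
    rw [le_div_iff₀ (by positivity), hA]
    push_cast; linarith
  set τ : ℝ := (A : ℝ) / 2 ^ B with hτ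
  have hτ1 : τ ≤ 1 := by linarith
  obtain ⟨n0, d, h⟩ := Y.compress A B (by omega) hτ1 hTA
  set η := ε / 3 with hη
  have hη0 : 0 < η := by rw [hη]; linarith
  obtain ⟨n1, hn1⟩ := exists_nat_gt ((4 / η + 7 + d) / η)
  refine limsup_le_of_le (isCoboundedUnder_le_of_le atTop (x := 0) fun n => by positivity) ?_
  filter_upwards [eventually_ge_atTop (n0 + n1 + 1)] with n hn
  have hn' : (0 : ℝ) < n := by exact_mod_cast (by omega : 0 < n)
  rw [div_le_iff₀ hn']
  have hj : n < 2 ^ (2 * (Nat.sqrt n + 1)) := by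
    calc n < (Nat.sqrt n + 1) * (Nat.sqrt n + 1) := Nat.lt_succ_sqrt n
      _ ≤ 2 ^ (Nat.sqrt n + 1) * 2 ^ (Nat.sqrt n + 1) :=
        Nat.mul_le_mul Nat.lt_two_pow_self.le Nat.lt_two_pow_self.le
      _ = _ := by rw [two_mul, ← pow_add]
  have h1 := h n (by omega) _ hj
  have h1' : (complexity U (firstBits T n) : ℝ) ≤
      2 * (2 * ((Nat.sqrt n : ℝ) + 1)) + 1 + wB A B n + d := by exact_mod_cast h1
  have h2 := wB_le A B n
  rw [← hτ] at h2
  set s : ℝ := (Nat.sqrt n : ℝ) with hs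
  have hsn : s * s ≤ n := by rw [hs]; exact_mod_cast Nat.sqrt_le n
  have h3 : 4 * s ≤ η * n + 4 / η := by
    have : 4 * s ≤ η * (s * s) + 4 / η := by
      have e : η * (s * s) + 4 / η - 4 * s = (η * s - 2) ^ 2 / η := by field_simp; ring
      have : 0 ≤ (η * s - 2) ^ 2 / η := by positivity
      linarith
    have := mul_le_mul_of_nonneg_left hsn hη0.le
    linarith
  have h4 : 4 / η + 7 + d ≤ η * n := by
    rw [div_lt_iff₀ hη0] at hn1
    have : (n1 : ℝ) ≤ n := by exact_mod_cast (by omega : n1 ≤ n)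
    nlinarith
  have h5 : τ * n ≤ (T + η) * n := by
    apply mul_le_mul_of_nonneg_right _ hn'.le
    linarith
  have h6 : (T + ε) * n = (T + η) * n + η * n + η * n := by rw [hη]; ring
  linarith

end Sys

theorem exists_sys {U : List Bool →. List Bool} (hU : OptimalMachine U) {T : ℝ} (hT0 : 0 < T)
    (hT1 : T < 1) (hF : ComputableReal (Ffun U T)) : Nonempty (Sys U T) := by
  obtain ⟨E, hE, h1, h2, h3, h4, ⟨p1, s1⟩, hx, ⟨p2, s2⟩, hy, hne⟩ := enumeration hU
  have hF0 : 0 ≤ Ffun U T := by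
    unfold Ffun
    have hZ0 : 0 ≤ Zfun U T := tsum_nonneg fun _ => by positivity
    have : Real.logb 2 (Zfun U T) ≤ 0 :=
      Real.logb_nonpos (by norm_num) hZ0 (Zfun_le_one hU.2.1 hT0 hT1.le)
    nlinarith
  obtain ⟨u, v, hu, hv, huv⟩ := approx_of_computableReal hF0 hF
  exact ⟨⟨E, u, v, p1, p2, hU, hT0, hT1, hE, hu, hv, h1, h2, h3, h4, ⟨s1, hx⟩, ⟨s2, hy⟩, hne, huv⟩⟩

theorem fixed_point_by_free_energy (U : List Bool →. List Bool)
    (hU : OptimalMachine U) (T : ℝ) (hT0 : 0 < T) (hT1 : T < 1)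
    (hF : ComputableReal (Ffun U T)) :
    WeaklyChaitinTRandom U T T ∧ TCompressible U T T := by
  obtain ⟨Y⟩ := exists_sys hU hT0 hT1 hF
  exact ⟨Y.part_A, Y.part_B⟩
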